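/- arXiv:1702.04072 — 2 statements merged into one kernel-verified Lean document; each statement's English description precedes it below -/
import Mathlib

section
/- For every integer b ≥ 2, with T(N) = ⌊log N/log 4⌋ + 1 and φ(N) = 2(1+2δ)·(1/2 + 2/(√b − 1))·√(N·log log N) for δ = 1/2, and for all sufficiently large n (specifically n > e^{6/(δ log 2)}), the measure of G_{b,n} = ⋃_{h=1}^{T(2^n)} ⋃_{a=0}^{2^h−1} {x ∈ (0,1) : F(0, 2^n, α₁, α₂, ({b^j x})_{j≥0}) ≥ 2^{−h/8}·φ(2^n)} is at most n^{−(1+4δ)} = n^{−3}, where [α₁,α₂) is the dyadic interval of level h+1 (resp. level T(2^n) when h = T(2^n)) indexed by a. -/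
/-!
Write `p = v - u` for the length of an interval `[u, v) ⊆ [0, 1]`, `S_N` for the number of
`j < N` with `{b ^ j x} ∈ [u, v)`, and `(L f) x = (1 / b) ∑_{i < b} f ((x + i) / b)` for the
transfer operator of `x ↦ b x mod 1`. The proof is a Chernoff bound for `S_N` whose variance proxy
is proportional to `N p`, uniformly over all interval lengths; this is what makes a union bound
over all dyadic levels possible.

The exponential moment is computed through a positive supersolution of the perturbed transfer
operator. On the circle, `1_{[u, v)} - p` is a difference of two sawtooth functions, and `L` sends
the sawtooth `{x - w}` to `{x - b w} / b` up to a constant. Hence the solution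
`V = ∑_{m ≥ 1} L ^ m (1_{[u, v)} - p)` of the Poisson equation `L V = V - L 1_{[u, v)} + p`
is an explicit series, bounded by `c = 1 / (b - 1)` (`transfer_corr`, `abs_corr_le`).
With `s = e ^ l - 1` and `s' = s / (1 - c s)`, the coefficient of `L 1_{[u, v)}` cancels and
`L ((1 + s 1_{[u, v)}) (1 + s' V)) ≤ ρ (1 + s' V)` with `ρ = 1 + p s / (1 - 2 c s)`
(`transfer_super`). Iterating gives `∫ e ^ (l S_N) ≤ 2 ρ ^ N` for `|l| ≤ 1 / 20`, for both signs of
`l`, and Markov's inequality yields `tail_bound`.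

With `τ = 1 / 2 + 2 / (√b - 1)` one has `1 / 2 + 2 c ≤ 2 τ ^ 2`, so the optimal `l` gives measure at
most `4 exp (-t ^ 2 / (12 N p τ ^ 2))` for discrepancy at least `t` (`disc_tail`). For the threshold
of level `h` and `p = 2 ^ (-k)` the exponent is `-(4 / 3) 2 ^ (k - h / 4) log log N`. As
`2 ^ (k - h / 4) ≥ 29 / 10 + h / 10` at every level, each of the `2 ^ h` sets of level `h` has measure
at most `n ^ (-3) 4 ^ (-h)` (`level_bound`), and the sum over all of them is at most `n ^ (-3)`.
-/

open scoped Classical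

/-- F(M,N,u,v,(x_j)) = |#{j : M ≤ j < M+N, u ≤ x_j < v} − (v−u)N| -/
noncomputable def discCount (x : ℕ → ℝ) (M N : ℕ) (u v : ℝ) : ℝ :=
  |(((Finset.Ico M (M + N)).filter (fun j => u ≤ x j ∧ x j < v)).card : ℝ) - (v - u) * N|

/-! ### The transfer operator and its Poisson equation -/

/-- The indicator function of `[u, v)` modulo one, as a `1`-periodic function on `ℝ`. -/
noncomputable def ind (u v x : ℝ) : ℝ := if u ≤ Int.fract x ∧ Int.fract x < v then 1 else 0

/-- A difference of two sawtooth functions, scaled by `b ^ (-m)`. It is the `m`-th iterate of the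
transfer operator applied to the centred indicator of `[u, v)`; see `saw_zero`, `transfer_saw`. -/
noncomputable def saw (b : ℕ) (u v : ℝ) (m : ℕ) (x : ℝ) : ℝ :=
  (Int.fract (x - (b : ℝ) ^ m * v) - Int.fract (x - (b : ℝ) ^ m * u)) / (b : ℝ) ^ m

/-- The corrector `V = ∑_{m ≥ 1} L ^ m (1_{[u, v)} - (v - u))`, which solves the Poisson equation
`transfer_corr`. -/
noncomputable def corr (b : ℕ) (u v x : ℝ) : ℝ := ∑' m : ℕ, saw b u v (m + 1) x

/-- The transfer operator of `x ↦ b x mod 1` with respect to Lebesgue measure, acting on functions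
on `ℝ` (meant to be `1`-periodic). -/
noncomputable def transfer (b : ℕ) (f : ℝ → ℝ) (x : ℝ) : ℝ :=
  (∑ i ∈ Finset.range b, f ((x + i) / b)) / b

lemma ind_nonneg (u v x : ℝ) : 0 ≤ ind u v x := by unfold ind; split_ifs <;> norm_num

lemma ind_periodic (u v x : ℝ) (k : ℕ) : ind u v (x + k) = ind u v x := by
  simp [ind, Int.fract_add_natCast]

lemma measurable_ind (u v : ℝ) : Measurable (ind u v) := by
  unfold ind
  refine Measurable.ite ?_ measurable_const measurable_const
  exact (measurableSet_le measurable_const measurable_fract).inter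
    (measurableSet_lt measurable_fract measurable_const)

lemma saw_zero (b : ℕ) {u v : ℝ} (hu : 0 ≤ u) (huv : u ≤ v) (hv : v ≤ 1) (x : ℝ) :
    saw b u v 0 x = ind u v x - (v - u) := by
  have key : ∀ w : ℝ, 0 ≤ w → w ≤ 1 →
      Int.fract (x - w) = Int.fract x - w + if Int.fract x < w then 1 else 0 := by
    intro w h0 h1
    have hf0 := Int.fract_nonneg x
    have hf1 := Int.fract_lt_one x
    rw [Int.fract_eq_iff]
    split_ifs with h
    · refine ⟨by linarith, by linarith, ⌊x⌋ - 1, ?_⟩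
      have := Int.self_sub_floor x
      push_cast; linarith
    · refine ⟨by linarith, by linarith, ⌊x⌋, ?_⟩
      have := Int.self_sub_floor x
      linarith
  simp only [saw, pow_zero, one_mul, div_one]
  rw [key v (hu.trans huv) hv, key u hu (huv.trans hv)]
  unfold ind
  by_cases h1 : Int.fract x < u
  · have h2 : Int.fract x < v := by linarith
    have h3 : ¬ (u ≤ Int.fract x) := by linarith
    simp [h1, h2, h3]
  · have h3 : u ≤ Int.fract x := by linarith
    by_cases h2 : Int.fract x < v <;> simp [h1, h2, h3]
    ring

/-- The distribution relation of the first Bernoulli polynomial: both sides are `1`-periodic in `z`,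
and on `[0, 1)` the sum is an arithmetic progression. -/
lemma sum_fract_shift (b : ℕ) (hb : 0 < b) (z : ℝ) :
    ∑ i ∈ Finset.range b, Int.fract ((z + i) / b) = Int.fract z + ((b : ℝ) - 1) / 2 := by
  have hb' : (0 : ℝ) < b := by exact_mod_cast hb
  have hper : Function.Periodic
      (fun z : ℝ => ∑ i ∈ Finset.range b, Int.fract ((z + i) / b)) 1 := by
    intro z
    have h1 := Finset.sum_range_succ (fun i : ℕ => Int.fract ((z + i) / b)) b
    have h2 := Finset.sum_range_succ' (fun i : ℕ => Int.fract ((z + i) / b)) b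
    have h3 : Int.fract ((z + b) / b) = Int.fract ((z + (0 : ℕ)) / b) := by
      rw [add_div, div_self hb'.ne', Int.fract_add_one]; simp
    have h4 : ∀ i : ℕ, (z + 1 + i) / (b : ℝ) = (z + (i + 1 : ℕ)) / b := by
      intro i; push_cast; ring
    simp only [h4]
    linarith
  have h := hper.sub_int_mul_eq (x := z) ⌊z⌋
  simp only [mul_one, Int.self_sub_floor] at h
  rw [← h]
  have h0 := Int.fract_nonneg z
  have h1 := Int.fract_lt_one z
  have : ∀ i ∈ Finset.range b, Int.fract ((Int.fract z + i) / b) = (Int.fract z + i) / b := by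
    intro i hi
    have hi' : (i : ℝ) + 1 ≤ b := by exact_mod_cast Finset.mem_range.1 hi
    rw [Int.fract_eq_self]
    exact ⟨by positivity, by rw [div_lt_one hb']; linarith⟩
  rw [Finset.sum_congr rfl this, ← Finset.sum_div, Finset.sum_add_distrib]
  have hg : ∑ i ∈ Finset.range b, (i : ℝ) = b * (b - 1) / 2 := by
    clear this h hper
    have := Finset.sum_range_id_mul_two b
    have h5 : ((∑ i ∈ Finset.range b, i : ℕ) : ℝ) * 2 = b * ((b - 1 : ℕ) : ℝ) := by
      exact_mod_cast this
    rw [Nat.cast_sub hb] at h5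
    push_cast at h5
    linarith
  rw [hg]
  simp only [Finset.sum_const, Finset.card_range, nsmul_eq_mul]
  field_simp
  try ring

lemma transfer_saw (b : ℕ) (hb : 0 < b) (u v : ℝ) (m : ℕ) (x : ℝ) :
    transfer b (saw b u v m) x = saw b u v (m + 1) x := by
  have hb' : (0 : ℝ) < b := by exact_mod_cast hb
  have hw : ∀ (w : ℝ), ∑ i ∈ Finset.range b, Int.fract ((x + i) / b - (b : ℝ) ^ m * w)
      = Int.fract (x - (b : ℝ) ^ (m + 1) * w) + ((b : ℝ) - 1) / 2 := by
    intro w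
    rw [← sum_fract_shift b hb]
    refine Finset.sum_congr rfl fun i _ => ?_
    congr 1
    field_simp
    ring
  simp only [transfer, saw]
  rw [← Finset.sum_div, Finset.sum_sub_distrib, hw, hw]
  field_simp
  ring

lemma abs_saw_le (b : ℕ) (u v : ℝ) (m : ℕ) (x : ℝ) :
    |saw b u v m x| ≤ (1 / (b : ℝ)) ^ m := by
  unfold saw
  rw [abs_div, abs_of_nonneg (by positivity : (0 : ℝ) ≤ (b : ℝ) ^ m), one_div, inv_pow, ← one_div]
  gcongr
  rw [abs_le]
  constructor <;>
  linarith [Int.fract_nonneg (x - (b : ℝ) ^ m * v), Int.fract_lt_one (x - (b : ℝ) ^ m * v),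
    Int.fract_nonneg (x - (b : ℝ) ^ m * u), Int.fract_lt_one (x - (b : ℝ) ^ m * u)]

lemma hasSum_geom (b : ℕ) (hb : 2 ≤ b) :
    HasSum (fun m : ℕ => (1 / (b : ℝ)) ^ (m + 1)) (1 / ((b : ℝ) - 1)) := by
  have hb' : (2 : ℝ) ≤ b := by exact_mod_cast hb
  have h := (hasSum_geometric_of_lt_one (r := 1 / (b : ℝ)) (by positivity)
    (by rw [div_lt_one (by linarith)]; linarith)).mul_left (1 / (b : ℝ))
  have h1 : (b : ℝ) - 1 ≠ 0 := by linarith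
  have h2 : 1 / (b : ℝ) * (1 - 1 / (b : ℝ))⁻¹ = 1 / ((b : ℝ) - 1) := by
    field_simp
  rw [h2] at h
  simpa only [pow_succ'] using h

lemma summable_saw (b : ℕ) (hb : 2 ≤ b) (u v x : ℝ) :
    Summable fun m : ℕ => saw b u v (m + 1) x :=
  Summable.of_norm_bounded (hasSum_geom b hb).summable fun m => abs_saw_le b u v (m + 1) x

lemma abs_corr_le (b : ℕ) (hb : 2 ≤ b) (u v x : ℝ) : |corr b u v x| ≤ 1 / ((b : ℝ) - 1) :=
  tsum_of_norm_bounded (f := fun m => saw b u v (m + 1) x) (hasSum_geom b hb)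
    fun m => abs_saw_le b u v (m + 1) x

lemma measurable_saw (b : ℕ) (u v : ℝ) (m : ℕ) : Measurable (saw b u v m) := by
  unfold saw
  fun_prop

lemma measurable_corr (b : ℕ) (hb : 2 ≤ b) (u v : ℝ) : Measurable (corr b u v) := by
  refine measurable_of_tendsto_metrizable (f := fun n x => ∑ m ∈ Finset.range n, saw b u v (m + 1) x)
    (fun n => Finset.measurable_fun_sum _ fun m _ => measurable_saw b u v (m + 1)) ?_
  rw [tendsto_pi_nhds]
  exact fun x => (summable_saw b hb u v x).hasSum.tendsto_sum_nat

/-- The Poisson equation for the corrector. -/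
lemma transfer_corr (b : ℕ) (hb : 2 ≤ b) {u v : ℝ} (hu : 0 ≤ u) (huv : u ≤ v) (hv : v ≤ 1) (x : ℝ) :
    transfer b (corr b u v) x = corr b u v x - transfer b (ind u v) x + (v - u) := by
  have hb0 : 0 < b := by omega
  have hb' : (b : ℝ) ≠ 0 := by positivity
  have h1 : transfer b (corr b u v) x = ∑' m : ℕ, saw b u v (m + 1 + 1) x := by
    unfold transfer corr
    rw [← Summable.tsum_finsetSum fun i _ => summable_saw b hb u v _, ← tsum_div_const]
    exact tsum_congr fun m => transfer_saw b hb0 u v (m + 1) x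
  have h2 : corr b u v x = saw b u v 1 x + ∑' m : ℕ, saw b u v (m + 1 + 1) x := by
    unfold corr
    rw [(summable_saw b hb u v x).tsum_eq_zero_add]
  have h3 : saw b u v 1 x = transfer b (ind u v) x - (v - u) := by
    rw [← transfer_saw b hb0]
    simp only [transfer, saw_zero b hu huv hv, Finset.sum_sub_distrib]
    simp only [Finset.sum_const, Finset.card_range, nsmul_eq_mul]
    field_simp
  rw [h1, h2, h3]; ring

/-- The function `1 + s' V` is a supersolution for the transfer operator weighted by
`1 + s 1_{[u, v)}`. The relation between `s'` and `s` is the one for which the terms containing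
`L 1_{[u, v)}` cancel once `V ≤ c` is used on `[u, v)`; the growth factor is therefore proportional
to the length `v - u`. -/
lemma transfer_super (b : ℕ) (hb : 2 ≤ b) {u v : ℝ} (hu : 0 ≤ u) (huv : u ≤ v) (hv : v ≤ 1)
    {c s s' : ℝ} (hc : c = 1 / ((b : ℝ) - 1)) (hs : 2 * c * s < 1) (hs' : s' * (1 - c * s) = s)
    (x : ℝ) :
    transfer b (fun y => (1 + s' * corr b u v y) * (1 + s * ind u v y)) x ≤
      (1 + (v - u) * s / (1 - 2 * c * s)) * (1 + s' * corr b u v x) := by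
  have hb0 : 0 < b := by omega
  have hb' : (b : ℝ) ≠ 0 := by positivity
  have hb2 : (2 : ℝ) ≤ b := by exact_mod_cast hb
  have hV := fun y => abs_le.1 (hc ▸ abs_corr_le b hb u v y)
  have hcs : 0 < 1 - c * s := by linarith
  have hss : 0 ≤ s * s' := by
    have : s * s' = s' ^ 2 * (1 - c * s) := by linear_combination -s' * hs'
    rw [this]; positivity
  -- On `[u, v)` the corrector is at most `c`.
  have hprod : transfer b (fun y => corr b u v y * ind u v y) x ≤ c * transfer b (ind u v) x := by
    unfold transfer
    rw [← mul_div_assoc, Finset.mul_sum]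
    gcongr with i _
    exact mul_le_mul_of_nonneg_right (hV _).2 (ind_nonneg _ _ _)
  have hexp : transfer b (fun y => (1 + s' * corr b u v y) * (1 + s * ind u v y)) x =
      1 + s * transfer b (ind u v) x + s' * transfer b (corr b u v) x
        + s * s' * transfer b (fun y => corr b u v y * ind u v y) x := by
    have : ∀ y, (1 + s' * corr b u v y) * (1 + s * ind u v y) = 1 + s * ind u v y +
      s' * corr b u v y + s * s' * (corr b u v y * ind u v y) := fun y => by ring
    simp only [transfer, this, Finset.sum_add_distrib, ← Finset.mul_sum]
    simp only [Finset.sum_const, Finset.card_range, nsmul_eq_mul]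
    field_simp
  rw [hexp, transfer_corr b hb hu huv hv]
  have h1 := mul_le_mul_of_nonneg_left hprod hss
  have h2 : 0 ≤ (v - u) / (1 - 2 * c * s) * (s * s' * (corr b u v x + c)) :=
    mul_nonneg (div_nonneg (by linarith) (by linarith))
      (mul_nonneg hss (by linarith [(hV x).1]))
  have h3 : (v - u) * s / (1 - 2 * c * s) * (1 + s' * corr b u v x) - s' * (v - u) =
      (v - u) / (1 - 2 * c * s) * (s * s' * (corr b u v x + c)) := by
    have hD : 1 - 2 * c * s ≠ 0 := by linarith
    generalize hDe : 1 - 2 * c * s = D at hD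
    field_simp
    rw [← hDe]
    linear_combination (-(v - u)) * hs'
  have h4 : transfer b (ind u v) x * (s - s' + s * s' * c) = 0 := by
    -- The choice of `s'` makes this coefficient vanish.
    have : s - s' + s * s' * c = 0 := by linear_combination -hs'
    rw [this, mul_zero]
  nlinarith

/-! ### Exponential moments and tail bounds -/

lemma intervalIntegrable_of_bdd {f : ℝ → ℝ} (hf : Measurable f) {C : ℝ} (hC : ∀ x, |f x| ≤ C)
    (a b : ℝ) : IntervalIntegrable f MeasureTheory.volume a b := by
  rw [intervalIntegrable_iff]
  exact MeasureTheory.Measure.integrableOn_of_bounded (M := C) (by simp [Set.uIoc])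
    hf.aestronglyMeasurable (Filter.Eventually.of_forall hC)

lemma integral_eq_integral_transfer (b : ℕ) (hb : 0 < b) {f : ℝ → ℝ} (hf : Measurable f) {C : ℝ}
    (hC : ∀ x, |f x| ≤ C) : ∫ x in (0 : ℝ)..1, f x = ∫ x in (0 : ℝ)..1, transfer b f x := by
  have hb' : (b : ℝ) ≠ 0 := by positivity
  have h1 : ∀ i : ℕ, ∫ x in (0 : ℝ)..1, f ((x + i) / b) =
      b * ∫ x in ((i : ℝ) / b)..(((i + 1 : ℕ) : ℝ) / b), f x := by
    intro i
    rw [intervalIntegral.integral_comp_add_right (fun x => f (x / b)),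
      intervalIntegral.integral_comp_div _ hb', smul_eq_mul]
    push_cast
    rw [zero_add, add_comm (1 : ℝ)]
  unfold transfer
  rw [intervalIntegral.integral_div, intervalIntegral.integral_finsetSum]
  · simp only [h1]
    rw [← Finset.mul_sum, intervalIntegral.sum_integral_adjacent_intervals
      (a := fun i : ℕ => (i : ℝ) / b) (fun i _ => intervalIntegrable_of_bdd hf hC _ _)]
    simp only [Nat.cast_zero, zero_div, div_self hb']
    field_simp
  · intro i _
    exact intervalIntegrable_of_bdd (by fun_prop) (fun x => hC _) _ _

/-- Iterating the supersolution inequality: each application of the transfer operator removes one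
factor from the product, at the cost of a factor `ρ`. -/
lemma integral_prod_le (b : ℕ) (hb : 0 < b) {ψ g : ℝ → ℝ} (hψ : Measurable ψ) (hg : Measurable g)
    {C K ρ : ℝ} (hψ0 : ∀ x, 0 ≤ ψ x) (hψC : ∀ x, ψ x ≤ C) (hg0 : ∀ x, 0 ≤ g x)
    (hgK : ∀ x, g x ≤ K) (hper : ∀ x (k : ℕ), g (x + k) = g x) (hρ : 0 ≤ ρ)
    (h : ∀ x, transfer b (fun y => ψ y * g y) x ≤ ρ * ψ x) (N : ℕ) :
    ∫ x in (0 : ℝ)..1, ψ x * ∏ j ∈ Finset.range N, g ((b : ℝ) ^ j * x) ≤ ρ ^ N * C := by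
  have hb' : (b : ℝ) ≠ 0 := by positivity
  have hC0 : 0 ≤ C := (hψ0 0).trans (hψC 0)
  have hP0 : ∀ n x, 0 ≤ ∏ j ∈ Finset.range n, g ((b : ℝ) ^ j * x) :=
    fun n x => Finset.prod_nonneg fun j _ => hg0 _
  have hPK : ∀ n x, ∏ j ∈ Finset.range n, g ((b : ℝ) ^ j * x) ≤ K ^ n := fun n x =>
    (Finset.prod_le_prod (fun j _ => hg0 _) (fun j _ => hgK _)).trans (by simp)
  have hPm : ∀ n, Measurable fun x => ∏ j ∈ Finset.range n, g ((b : ℝ) ^ j * x) :=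
    fun n => Finset.measurable_fun_prod _ fun j _ => hg.comp (measurable_const_mul _)
  have hbd : ∀ n x, |ψ x * ∏ j ∈ Finset.range n, g ((b : ℝ) ^ j * x)| ≤ C * K ^ n := by
    intro n x
    rw [abs_of_nonneg (mul_nonneg (hψ0 x) (hP0 n x))]
    exact mul_le_mul (hψC x) (hPK n x) (hP0 n x) hC0
  induction N with
  | zero =>
    simp only [Finset.range_zero, Finset.prod_empty, mul_one, pow_zero, one_mul]
    calc ∫ x in (0 : ℝ)..1, ψ x ≤ ∫ x in (0 : ℝ)..1, C := by
          refine intervalIntegral.integral_mono (by norm_num)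
            (intervalIntegrable_of_bdd hψ (C := C) (fun x => ?_) _ _) (by simp) hψC
          rw [abs_of_nonneg (hψ0 x)]; exact hψC x
      _ = C := by simp
  | succ n ih =>
    have htr : ∀ x, transfer b (fun y => ψ y * ∏ j ∈ Finset.range (n + 1), g ((b : ℝ) ^ j * y)) x =
        transfer b (fun y => ψ y * g y) x * ∏ j ∈ Finset.range n, g ((b : ℝ) ^ j * x) := by
      intro x
      unfold transfer
      rw [div_mul_eq_mul_div, Finset.sum_mul]
      congr 1
      refine Finset.sum_congr rfl fun i _ => ?_
      dsimp only
      rw [Finset.prod_range_succ', pow_zero, one_mul]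
      have : ∀ j : ℕ, g ((b : ℝ) ^ (j + 1) * ((x + i) / b)) = g ((b : ℝ) ^ j * x) := by
        intro j
        rw [← hper ((b : ℝ) ^ j * x) (b ^ j * i)]
        congr 1
        push_cast
        field_simp
        try ring
      simp only [this]
      ring
    rw [integral_eq_integral_transfer b hb
      (f := fun y => ψ y * ∏ j ∈ Finset.range (n + 1), g ((b : ℝ) ^ j * y))
      (hψ.mul (hPm (n + 1))) (hbd (n + 1))]
    calc ∫ x in (0 : ℝ)..1,
          transfer b (fun y => ψ y * ∏ j ∈ Finset.range (n + 1), g ((b : ℝ) ^ j * y)) x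
        ≤ ∫ x in (0 : ℝ)..1, ρ * (ψ x * ∏ j ∈ Finset.range n, g ((b : ℝ) ^ j * x)) := by
          refine intervalIntegral.integral_mono (by norm_num) ?_ ?_ fun x => ?_
          · have hm := hψ.mul (hPm (n + 1))
            refine intervalIntegrable_of_bdd (C := C * K ^ (n + 1)) ?_ (fun x => ?_) _ _
            · unfold transfer
              refine Measurable.div_const (Finset.measurable_fun_sum _ fun i _ => ?_) _
              exact hm.comp (by fun_prop : Measurable fun x : ℝ => (x + i) / b)
            · unfold transfer
              rw [abs_div, Nat.abs_cast, div_le_iff₀ (by positivity)]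
              refine (Finset.abs_sum_le_sum_abs _ _).trans
                ((Finset.sum_le_sum fun i _ => hbd (n + 1) _).trans ?_)
              simp [mul_comm]
          · exact (intervalIntegrable_of_bdd (hψ.mul (hPm n)) (hbd n) _ _).const_mul ρ
          · dsimp only
            rw [htr, ← mul_assoc]
            exact mul_le_mul_of_nonneg_right (h x) (hP0 n x)
      _ ≤ ρ * (ρ ^ n * C) := by
          rw [intervalIntegral.integral_const_mul]
          exact mul_le_mul_of_nonneg_left ih hρ
      _ = ρ ^ (n + 1) * C := by ring

lemma exp_approx {l : ℝ} (hl : |l| ≤ 1 / 20) :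
    |Real.exp l - 1 - l| ≤ (11 / 20) * l ^ 2 := by
  have h := Real.exp_bound (x := l) (by linarith) (n := 3) (by norm_num)
  simp only [Finset.sum_range_succ, Finset.range_zero, Finset.sum_empty, Nat.factorial] at h
  norm_num at h
  have h3 : |l| ^ 3 ≤ 1 / 20 * l ^ 2 := by
    have : |l| ^ 3 = |l| * l ^ 2 := by rw [← sq_abs l]; ring
    rw [this]
    exact mul_le_mul_of_nonneg_right hl (sq_nonneg l)
  rw [abs_le] at h ⊢
  constructor <;> nlinarith [sq_nonneg l, h.1, h.2]

/-- For `s = e ^ l - 1` the exponent `s / (1 - 2 c s)` equals `l + (1 / 2 + 2 c) l ^ 2 + O(l ^ 3)`; the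
cubic error is absorbed by the factor `3 / 2`. -/
lemma exponent_bound {l c s : ℝ} (hl : |l| ≤ 1 / 20) (hc0 : 0 ≤ c) (hc1 : c ≤ 1)
    (hs : s = Real.exp l - 1) :
    |s| ≤ 11 / 200 ∧ s / (1 - 2 * c * s) ≤ l + (3 / 2) * (1 / 2 + 2 * c) * l ^ 2 := by
  have h := abs_le.1 (exp_approx hl)
  have hl' := abs_le.1 hl
  have hl2 : l ^ 2 ≤ 1 / 400 := by nlinarith
  rw [← hs] at h
  have hs1 : |s| ≤ 11 / 200 := by rw [abs_le]; constructor <;> linarith [h.1, h.2]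
  refine ⟨hs1, ?_⟩
  have hs' := abs_le.1 hs1
  have hcs : c * s ≤ 11 / 200 := by nlinarith
  have hD : 0 < 1 - 2 * c * s := by linarith
  have hssq : s ^ 2 ≤ (23 / 20) * l ^ 2 := by
    have h1 : |s| ≤ (21 / 20) * |l| := by
      have h2 : |s - l| ≤ (11 / 20) * l ^ 2 := abs_le.2 h
      have h3 : |s| ≤ |s - l| + |l| := by simpa using abs_add_le (s - l) l
      have h4 : l ^ 2 ≤ 1 / 20 * |l| := by
        rw [← sq_abs l, sq]; exact mul_le_mul_of_nonneg_right hl (abs_nonneg l)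
      linarith [abs_nonneg l]
    have h5 := mul_self_le_mul_self (abs_nonneg s) h1
    rw [← sq_abs s, ← sq_abs l]
    nlinarith [sq_nonneg |l|]
  have h6 : s / (1 - 2 * c * s) = s + 2 * c * (s ^ 2 / (1 - 2 * c * s)) := by
    generalize hDe : 1 - 2 * c * s = D at hD
    field_simp
    rw [← hDe]; ring
  have h7 : s ^ 2 / (1 - 2 * c * s) ≤ (3 / 2) * l ^ 2 := by
    rw [div_le_iff₀ hD]
    have : (3 / 2) * l ^ 2 * (89 / 100) ≤ (3 / 2) * l ^ 2 * (1 - 2 * c * s) := by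
      refine mul_le_mul_of_nonneg_left (by linarith) (by positivity)
    nlinarith [sq_nonneg l]
  have h8 := mul_le_mul_of_nonneg_left h7 (by linarith : 0 ≤ 2 * c)
  rw [h6]
  nlinarith [sq_nonneg l, h.2]

/-- One-sided Chernoff bound. The sign of `l` decides whether it controls the upper or the lower
tail. -/
lemma tail_bound (b : ℕ) (hb : 2 ≤ b) {u v : ℝ} (hu : 0 ≤ u) (huv : u ≤ v) (hv : v ≤ 1)
    {l : ℝ} (hl : |l| ≤ 1 / 20) (τ : ℝ) (N : ℕ) :
    MeasureTheory.volume {x ∈ Set.Ioo (0 : ℝ) 1 |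
      τ ≤ l * (∑ j ∈ Finset.range N, ind u v ((b : ℝ) ^ j * x) - (v - u) * N)} ≤
    ENNReal.ofReal (2 * Real.exp (-τ +
      N * (v - u) * ((3 / 2) * (1 / 2 + 2 / ((b : ℝ) - 1)) * l ^ 2))) := by
  have hb0 : 0 < b := by omega
  have hb2 : (2 : ℝ) ≤ b := by exact_mod_cast hb
  obtain ⟨c, hc⟩ : ∃ c, c = 1 / ((b : ℝ) - 1) := ⟨_, rfl⟩
  obtain ⟨s, hs⟩ : ∃ s, s = Real.exp l - 1 := ⟨_, rfl⟩
  have hc0 : 0 ≤ c := by rw [hc]; exact div_nonneg zero_le_one (by linarith)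
  have hc1 : c ≤ 1 := by rw [hc, div_le_one (by linarith)]; linarith
  obtain ⟨hs1, hexp⟩ := exponent_bound hl hc0 hc1 hs
  have hs2 := abs_le.1 hs1
  have hcs : |c * s| ≤ 11 / 200 := by
    rw [abs_mul, abs_of_nonneg hc0]; nlinarith [abs_nonneg s]
  have hcs2 := abs_le.1 hcs
  obtain ⟨s', hs'⟩ : ∃ s', s' = s / (1 - c * s) := ⟨_, rfl⟩
  have hsa : s' * (1 - c * s) = s := by
    rw [hs']; exact div_mul_cancel₀ _ (by linarith)
  have hsb : |s'| ≤ 1 / 10 := by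
    rw [hs', abs_div, abs_of_pos (by linarith : 0 < 1 - c * s), div_le_iff₀ (by linarith)]
    linarith
  have hV : ∀ x, |s' * corr b u v x| ≤ 1 / 10 := by
    intro x
    have := hc ▸ abs_corr_le b hb u v x
    rw [abs_mul]; nlinarith [abs_nonneg s', abs_nonneg (corr b u v x)]
  have hV' := fun x => abs_le.1 (hV x)
  have hind1 : ∀ x, ind u v x ≤ 1 := by intro x; unfold ind; split_ifs <;> norm_num
  have hsup := transfer_super b hb hu huv hv hc (by linarith) hsa
  have hD : 0 < 1 - 2 * c * s := by linarith
  have hρ : 0 ≤ 1 + (v - u) * s / (1 - 2 * c * s) := by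
    have : -1 ≤ (v - u) * s / (1 - 2 * c * s) := by
      rw [le_div_iff₀ hD]; nlinarith
    linarith
  have hmψ : Measurable fun x => 1 + s' * corr b u v x :=
    ((measurable_corr b hb u v).const_mul s').const_add 1
  have hmg : Measurable fun x => 1 + s * ind u v x :=
    ((measurable_ind u v).const_mul s).const_add 1
  have hgpos : ∀ x, 0 ≤ 1 + s * ind u v x := by
    intro x; nlinarith [hind1 x, ind_nonneg u v x]
  have hgle : ∀ x, 1 + s * ind u v x ≤ 2 := by
    intro x; nlinarith [hind1 x, ind_nonneg u v x]
  have hint := integral_prod_le b hb0 hmψ hmg (C := 11 / 10) (K := 2)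
    (fun x => by linarith [(hV' x).1]) (fun x => by linarith [(hV' x).2]) hgpos hgle
    (fun x k => by simp only [ind_periodic]) hρ hsup N
  obtain ⟨P, hP⟩ : ∃ P : ℝ → ℝ, P = fun x => ∏ j ∈ Finset.range N,
    (1 + s * ind u v ((b : ℝ) ^ j * x)) := ⟨_, rfl⟩
  have hPm : Measurable P := by
    rw [hP]; exact Finset.measurable_fun_prod _ fun j _ => hmg.comp (measurable_const_mul _)
  have hP0 : ∀ x, 0 ≤ P x := fun x => by rw [hP]; exact Finset.prod_nonneg fun j _ => hgpos _
  have hPK : ∀ x, P x ≤ 2 ^ N := fun x => by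
    rw [hP]; exact (Finset.prod_le_prod (fun j _ => hgpos _) (fun j _ => hgle _)).trans (by simp)
  have hPint : IntervalIntegrable P MeasureTheory.volume 0 1 :=
    intervalIntegrable_of_bdd hPm (fun x => by rw [abs_of_nonneg (hP0 x)]; exact hPK x) _ _
  -- Since `1 + s = e ^ l`, the product of the weights is the exponential of `l S_N`.
  have hPexp : ∀ x, P x = Real.exp (l * ∑ j ∈ Finset.range N, ind u v ((b : ℝ) ^ j * x)) := by
    intro x
    rw [hP, Finset.mul_sum, Real.exp_sum]
    refine Finset.prod_congr rfl fun j _ => ?_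
    unfold ind
    split_ifs <;> simp [hs]
  have hI : ∫ x in (0 : ℝ)..1, P x ≤
      2 * Real.exp (N * (v - u) * (l + (3 / 2) * (1 / 2 + 2 * c) * l ^ 2)) := by
    -- The supersolution lies in `[9 / 10, 11 / 10]`, so inserting it costs a factor below `2`.
    have h1 : ∫ x in (0 : ℝ)..1, (9 / 10) * P x ≤
        ∫ x in (0 : ℝ)..1, (1 + s' * corr b u v x) * ∏ j ∈ Finset.range N,
          (1 + s * ind u v ((b : ℝ) ^ j * x)) := by
      refine intervalIntegral.integral_mono (by norm_num) (hPint.const_mul _) ?_ fun x => ?_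
      · refine intervalIntegrable_of_bdd (C := 2 * 2 ^ N) (hmψ.mul (hP ▸ hPm)) (fun x => ?_) _ _
        have h3 := hP0 x
        have h4 := hPK x
        rw [hP] at h3 h4
        rw [Pi.mul_apply, abs_mul, abs_of_nonneg h3]
        refine mul_le_mul ?_ h4 h3 (by norm_num)
        rw [abs_le]; constructor <;> linarith [(hV' x).1, (hV' x).2]
      · have h3 := hP0 x
        rw [hP] at h3 ⊢
        exact mul_le_mul_of_nonneg_right (by linarith [(hV' x).1]) h3
    rw [intervalIntegral.integral_const_mul] at h1
    have h2 : (1 + (v - u) * s / (1 - 2 * c * s)) ^ N ≤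
        Real.exp (N * (v - u) * (l + (3 / 2) * (1 / 2 + 2 * c) * l ^ 2)) := by
      rw [mul_assoc (N : ℝ), Real.exp_nat_mul]
      refine pow_le_pow_left₀ hρ ?_ N
      refine (add_comm _ _).trans_le ((Real.add_one_le_exp _).trans (Real.exp_le_exp.2 ?_))
      rw [mul_div_assoc]
      exact mul_le_mul_of_nonneg_left hexp (by linarith)
    have h5 := Real.exp_pos (N * (v - u) * (l + (3 / 2) * (1 / 2 + 2 * c) * l ^ 2))
    linarith
  obtain ⟨ε, hε⟩ : ∃ ε, ε = Real.exp (τ + l * ((v - u) * N)) := ⟨_, rfl⟩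
  have hεpos : 0 < ε := by rw [hε]; exact Real.exp_pos _
  have hmk := MeasureTheory.mul_meas_ge_le_integral_of_nonneg
    (μ := MeasureTheory.volume.restrict (Set.Ioc (0 : ℝ) 1)) (f := P)
    (Filter.Eventually.of_forall hP0) ((intervalIntegrable_iff_integrableOn_Ioc_of_le
      zero_le_one).1 hPint) ε
  rw [← intervalIntegral.integral_of_le zero_le_one] at hmk
  have hsub : {x ∈ Set.Ioo (0 : ℝ) 1 |
      τ ≤ l * (∑ j ∈ Finset.range N, ind u v ((b : ℝ) ^ j * x) - (v - u) * N)} ⊆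
      {x | ε ≤ P x} ∩ Set.Ioc (0 : ℝ) 1 := by
    rintro x ⟨hx, hx2⟩
    refine ⟨?_, hx.1, hx.2.le⟩
    change ε ≤ P x
    rw [hPexp, hε, Real.exp_le_exp]
    linarith
  refine (MeasureTheory.measure_mono hsub).trans
    ((MeasureTheory.Measure.le_restrict_apply _ _).trans ?_)
  rw [← ENNReal.ofReal_toReal (MeasureTheory.measure_ne_top _ _)]
  refine ENNReal.ofReal_le_ofReal ?_
  have h1 := hmk.trans hI
  rw [mul_comm, ← le_div_iff₀ hεpos] at h1
  refine h1.trans (le_of_eq ?_)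
  rw [hε, mul_div_assoc, ← Real.exp_sub]
  congr 2
  rw [hc]
  ring

lemma discCount_eq (b N : ℕ) (u v x : ℝ) :
    discCount (fun j => Int.fract ((b : ℝ) ^ j * x)) 0 N u v =
      |∑ j ∈ Finset.range N, ind u v ((b : ℝ) ^ j * x) - (v - u) * N| := by
  unfold discCount ind
  rw [Finset.card_filter, zero_add, ← Finset.range_eq_Ico]
  push_cast
  rfl

lemma tau_bounds (b : ℕ) (hb : 2 ≤ b) {τ : ℝ} (hτ : τ = 1 / 2 + 2 / (Real.sqrt b - 1)) :
    1 / 2 ≤ τ ∧ 1 / 2 + 2 / ((b : ℝ) - 1) ≤ 2 * τ ^ 2 := by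
  have hb2 : (2 : ℝ) ≤ b := by exact_mod_cast hb
  have h1 : 1 < Real.sqrt b := by rw [Real.lt_sqrt] <;> linarith
  have h2 : Real.sqrt b ≤ b := by
    rw [Real.sqrt_le_left (by linarith)]; nlinarith
  have h3 : 0 < 2 / (Real.sqrt b - 1) := div_pos two_pos (by linarith)
  have h4 : 2 / ((b : ℝ) - 1) ≤ 2 / (Real.sqrt b - 1) :=
    div_le_div_of_nonneg_left zero_le_two (by linarith) (by linarith)
  refine ⟨by linarith, ?_⟩
  rw [hτ]
  nlinarith [sq_nonneg (2 / (Real.sqrt b - 1))]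

/-- Two-sided tail bound, from `tail_bound` with the minimizing parameter
`l = t / (6 N (v - u) τ ^ 2)`. The smallness hypothesis says that this parameter is admissible. -/
lemma disc_tail (b : ℕ) (hb : 2 ≤ b) {τ : ℝ} (hτ : τ = 1 / 2 + 2 / (Real.sqrt b - 1))
    {u v : ℝ} (hu : 0 ≤ u) (huv : u < v) (hv : v ≤ 1) {N : ℕ} (hN : 0 < N) {t : ℝ} (ht : 0 ≤ t)
    (hsmall : t / (6 * (N * (v - u) * τ ^ 2)) ≤ 1 / 20) :
    MeasureTheory.volume {x ∈ Set.Ioo (0 : ℝ) 1 |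
      t ≤ discCount (fun j => Int.fract ((b : ℝ) ^ j * x)) 0 N u v} ≤
    ENNReal.ofReal (4 * Real.exp (-(t ^ 2 / (12 * (N * (v - u) * τ ^ 2))))) := by
  obtain ⟨hτ1, hτ2⟩ := tau_bounds b hb hτ
  have hW : 0 < N * (v - u) * τ ^ 2 := by
    have : (0 : ℝ) < N := by exact_mod_cast hN
    have : 0 < v - u := by linarith
    positivity
  obtain ⟨l, hl⟩ : ∃ l, l = t / (6 * (N * (v - u) * τ ^ 2)) := ⟨_, rfl⟩
  have hl0 : 0 ≤ l := by rw [hl]; positivity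
  rw [← hl] at hsmall
  have hexp : -(l * t) + N * (v - u) * ((3 / 2) * (1 / 2 + 2 / ((b : ℝ) - 1)) * l ^ 2) ≤
      -(t ^ 2 / (12 * (N * (v - u) * τ ^ 2))) := by
    have h1 : N * (v - u) * ((3 / 2) * (1 / 2 + 2 / ((b : ℝ) - 1)) * l ^ 2) ≤
        N * (v - u) * ((3 / 2) * (2 * τ ^ 2) * l ^ 2) := by
      have : 0 ≤ v - u := by linarith
      gcongr
    have h2 : -(l * t) + N * (v - u) * ((3 / 2) * (2 * τ ^ 2) * l ^ 2) =
        -(t ^ 2 / (12 * (N * (v - u) * τ ^ 2))) := by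
      have h3 : N * (v - u) * ((3 / 2) * (2 * τ ^ 2) * l ^ 2) =
        3 * (N * (v - u) * τ ^ 2) * l ^ 2 := by ring
      rw [h3, hl]
      generalize (N : ℝ) * (v - u) * τ ^ 2 = W at hW
      field_simp
      ring
    linarith
  have habs : |l| ≤ 1 / 20 := by rwa [abs_of_nonneg hl0]
  have h1 := tail_bound b hb hu huv.le hv habs (l * t) N
  have h2 := tail_bound b hb hu huv.le hv (l := -l) (by rwa [abs_neg]) (l * t) N
  rw [neg_sq] at h2
  refine (MeasureTheory.measure_mono ?_).trans
    ((MeasureTheory.measure_union_le _ _).trans ((add_le_add h1 h2).trans ?_))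
  · rintro x ⟨hx, hx2⟩
    rw [discCount_eq, le_abs] at hx2
    rcases hx2 with h | h
    · exact Or.inl ⟨hx, mul_le_mul_of_nonneg_left h hl0⟩
    · refine Or.inr ⟨hx, ?_⟩
      rw [neg_mul, ← mul_neg]
      exact mul_le_mul_of_nonneg_left h hl0
  · rw [← ENNReal.ofReal_add (by positivity) (by positivity)]
    refine ENNReal.ofReal_le_ofReal ?_
    have := Real.exp_le_exp.2 hexp
    linarith

/-! ### Numerical estimates at each dyadic level -/

/-- Growth of the exponent `2 ^ (k - h / 4)` with the level. At the top level, where `k = h`, the bound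
needs `h ≥ 5`. -/
lemma rpow_level_lower {h k T : ℕ} (hT : 5 ≤ T)
    (hk : k = if h < T then h + 1 else h) (h1 : 1 ≤ h) :
    29 / 10 + (h : ℝ) / 10 ≤ (2 : ℝ) ^ (-(h : ℝ) / 4) * 2 ^ k := by
  have hbern : 1 + (h : ℝ) / 2 ≤ (2 : ℝ) ^ (-(h : ℝ) / 4) * 2 ^ h := by
    have e : (2 : ℝ) ^ (-(h : ℝ) / 4) * 2 ^ h = ((2 : ℝ) ^ (3 / 4 : ℝ)) ^ h := by
      rw [← Real.rpow_natCast, ← Real.rpow_natCast, ← Real.rpow_mul zero_le_two,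
        ← Real.rpow_add two_pos]
      congr 1; ring
    have e2 : (3 / 2 : ℝ) ≤ (2 : ℝ) ^ (3 / 4 : ℝ) := by
      have : (3 / 2 : ℝ) = ((3 / 2 : ℝ) ^ (4 : ℝ)) ^ (1 / 4 : ℝ) := by
        rw [← Real.rpow_mul (by norm_num)]; norm_num
      rw [this, show (3 / 4 : ℝ) = 3 * (1 / 4) by norm_num, Real.rpow_mul zero_le_two]
      refine Real.rpow_le_rpow (by positivity) ?_ (by norm_num)
      norm_num
    rw [e]
    have h5 := one_add_mul_le_pow (a := (1 / 2 : ℝ)) (by norm_num) h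
    calc 1 + (h : ℝ) / 2 ≤ (1 + 1 / 2) ^ h := by linarith
      _ ≤ _ := by
        refine pow_le_pow_left₀ (by norm_num) ?_ h
        linarith
  have h1' : (1 : ℝ) ≤ h := by exact_mod_cast h1
  split_ifs at hk with hlt
  · rw [hk, pow_succ, ← mul_assoc]
    linarith
  · have : (5 : ℝ) ≤ h := by exact_mod_cast hT.trans (not_lt.1 hlt)
    rw [hk]
    linarith

/-- With `N = 2 ^ n` and `2 ^ k ≤ 2 √N`, this says `2 ^ (2 k - h / 4) ≤ 4 N ^ (7 / 8)`. It makes the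
parameter of the Chernoff bound small at every level. -/
lemma rpow_level_upper {h k n : ℕ} (hk : k ≤ h + 1) (hkn : 2 * k ≤ n + 2) :
    (2 : ℝ) ^ (-(h : ℝ) / 4) * 4 ^ k * (2 : ℝ) ^ ((n : ℝ) / 8) ≤ 4 * 2 ^ n := by
  have e1 : (4 : ℝ) ^ k = (2 : ℝ) ^ (2 * (k : ℝ)) := by
    rw [Real.rpow_mul zero_le_two, Real.rpow_natCast]; norm_num
  have e2 : (4 : ℝ) * 2 ^ n = (2 : ℝ) ^ (2 + (n : ℝ)) := by
    rw [Real.rpow_add two_pos, Real.rpow_natCast]; norm_num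
  rw [e1, e2, ← Real.rpow_add two_pos, ← Real.rpow_add two_pos]
  refine Real.rpow_le_rpow_of_exponent_le one_le_two ?_
  have h1 : (k : ℝ) ≤ h + 1 := by exact_mod_cast hk
  have h2 : 2 * (k : ℝ) ≤ n + 2 := by exact_mod_cast hkn
  linarith

lemma large_n {n : ℕ} (hn : Real.exp (6 / ((1 / 2 : ℝ) * Real.log 2)) < (n : ℝ)) :
    17 ≤ Real.log n ∧ 20000000 ≤ (n : ℝ) := by
  have h1 : Real.exp 17 < n := by
    refine lt_of_le_of_lt (Real.exp_le_exp.2 ?_) hn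
    have := Real.log_two_lt_d9
    have h0 := Real.log_pos one_lt_two
    rw [le_div_iff₀ (by positivity)]
    linarith
  have hn0 : (0 : ℝ) < n := (Real.exp_pos _).trans h1
  refine ⟨(Real.le_log_iff_exp_le hn0).2 h1.le, le_trans ?_ h1.le⟩
  have e : Real.exp 17 = Real.exp 1 ^ 17 := by rw [← Real.exp_nat_mul]; norm_num
  rw [e]
  calc (20000000 : ℝ) ≤ (27 / 10) ^ 17 := by norm_num
    _ ≤ _ := pow_le_pow_left₀ (by norm_num) (by linarith [Real.exp_one_gt_d9]) _

lemma loglog_bounds {n : ℕ} (hn : 20000000 ≤ (n : ℝ)) {L : ℝ}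
    (hL : L = Real.log (Real.log ((2 ^ n : ℕ) : ℝ))) :
    Real.log n - 7 / 10 ≤ L ∧ L ≤ n := by
  have h0 := Real.log_two_gt_d9
  have h1 := Real.log_two_lt_d9
  have hn0 : (0 : ℝ) < n := by linarith
  have e : L = Real.log n + Real.log (Real.log 2) := by
    rw [hL, Nat.cast_pow, Real.log_pow, Nat.cast_ofNat, Real.log_mul hn0.ne' (by linarith)]
  constructor
  · have : Real.log (1 / 2) ≤ Real.log (Real.log 2) :=
      Real.log_le_log (by norm_num) (by linarith)
    rw [one_div, Real.log_inv] at this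
    linarith
  · have h2 : Real.log (Real.log 2) ≤ 0 := Real.log_nonpos (by linarith) (by linarith)
    have h3 := Real.log_le_self hn0.le
    linarith

lemma two_rpow_large {n : ℕ} (hn : 20000000 ≤ (n : ℝ)) :
    3000 * (n : ℝ) ≤ (2 : ℝ) ^ ((n : ℝ) / 8) := by
  have h0 := Real.log_two_gt_d9
  rw [Real.rpow_def_of_pos two_pos]
  have h1 : (n : ℝ) / 16 ≤ Real.log 2 * (n / 8) := by nlinarith
  have h2 := Real.quadratic_le_exp_of_nonneg (by positivity : 0 ≤ (n : ℝ) / 16)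
  have h3 := Real.exp_le_exp.2 h1
  nlinarith

/-- The bound for a single set at level `h`. One factor `(1 / 2) ^ h` compensates the number of
intervals of that level, the other one makes the sum over the levels converge. -/
lemma level_bound {b n h k T a : ℕ} (hb : 2 ≤ b)
    (hn : Real.exp (6 / ((1 / 2 : ℝ) * Real.log 2)) < (n : ℝ))
    (hTdef : T = Nat.log 4 (2 ^ n) + 1)
    (hk : k = if h < T then h + 1 else h) (h1 : 1 ≤ h) (hhT : h ≤ T) (ha : a < 2 ^ h) :
    MeasureTheory.volume {x ∈ Set.Ioo (0 : ℝ) 1 |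
          (2 : ℝ) ^ (-(h : ℝ) / 8) *
              (2 * (1 + 2 * (1 / 2 : ℝ)) * (1 / 2 + 2 / (Real.sqrt b - 1)) *
                Real.sqrt ((2 ^ n : ℝ) * Real.log (Real.log ((2 ^ n : ℕ) : ℝ)))) ≤
            discCount (fun j => Int.fract ((b : ℝ) ^ j * x)) 0 (2 ^ n)
              ((a : ℝ) / 2 ^ k) (((a : ℝ) + 1) / 2 ^ k)} ≤
      ENNReal.ofReal ((n : ℝ) ^ (-(1 + 4 * (1 / 2 : ℝ))) * (1 / 2) ^ h * (1 / 2) ^ h) := by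
  obtain ⟨hlog, hnl⟩ := large_n hn
  have hn0 : (0 : ℝ) < n := by linarith
  obtain ⟨L, hL⟩ : ∃ L, L = Real.log (Real.log ((2 ^ n : ℕ) : ℝ)) := ⟨_, rfl⟩
  obtain ⟨hL1, hL2⟩ := loglog_bounds hnl hL
  obtain ⟨τ, hτ⟩ : ∃ τ, τ = 1 / 2 + 2 / (Real.sqrt b - 1) := ⟨_, rfl⟩
  obtain ⟨hτ1, -⟩ := tau_bounds b hb hτ
  have hT5 : 5 ≤ T := by
    have : 8 ≤ n := by
      have : (8 : ℝ) ≤ n := by linarith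
      exact_mod_cast this
    have h4 : 4 ≤ Nat.log 4 (2 ^ n) := by
      refine Nat.le_log_of_pow_le (by norm_num) ?_
      calc 4 ^ 4 = 2 ^ 8 := by norm_num
        _ ≤ 2 ^ n := Nat.pow_le_pow_right (by norm_num) this
    omega
  -- From `4 ^ (T - 1) ≤ 2 ^ n`.
  have hTn : 2 * T ≤ n + 2 := by
    have h4 : 4 ^ Nat.log 4 (2 ^ n) ≤ 2 ^ n := Nat.pow_log_le_self 4 (by positivity)
    rw [show (4 : ℕ) = 2 ^ 2 by norm_num, ← pow_mul] at h4
    have := (Nat.pow_le_pow_iff_right (by norm_num : 1 < 2)).1 h4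
    norm_num at this
    omega
  have hkh : k ≤ h + 1 := by split_ifs at hk <;> omega
  have hhk : h ≤ k := by split_ifs at hk <;> omega
  have hkn : 2 * k ≤ n + 2 := by split_ifs at hk <;> omega
  have hQ := rpow_level_lower hT5 hk h1
  have hU := rpow_level_upper hkh hkn
  have hlarge := two_rpow_large hnl
  obtain ⟨q, hq⟩ : ∃ q, q = (2 : ℝ) ^ (-(h : ℝ) / 4) := ⟨_, rfl⟩
  rw [← hq] at hQ hU
  have hq0 : 0 < q := by rw [hq]; positivity
  have hLpos : 0 < L := by linarith
  obtain ⟨t, ht⟩ : ∃ t, t = (2 : ℝ) ^ (-(h : ℝ) / 8) *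
      (2 * (1 + 2 * (1 / 2 : ℝ)) * τ * Real.sqrt ((2 ^ n : ℝ) * L)) := ⟨_, rfl⟩
  have ht0 : 0 ≤ t := by rw [ht]; positivity
  have htsq : t ^ 2 = 16 * τ ^ 2 * q * 2 ^ n * L := by
    have e1 : ((2 : ℝ) ^ (-(h : ℝ) / 8)) ^ 2 = q := by
      rw [hq, ← Real.rpow_natCast, ← Real.rpow_mul zero_le_two]
      congr 1; push_cast; ring
    have e2 : Real.sqrt ((2 ^ n : ℝ) * L) ^ 2 = 2 ^ n * L := Real.sq_sqrt (by positivity)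
    rw [ht, mul_pow, mul_pow, e1, e2]
    ring
  have hlen : ((a : ℝ) + 1) / 2 ^ k - (a : ℝ) / 2 ^ k = 1 / 2 ^ k := by
    rw [← sub_div]; congr 1; ring
  have hW : ((2 ^ n : ℕ) : ℝ) * (((a : ℝ) + 1) / 2 ^ k - (a : ℝ) / 2 ^ k) * τ ^ 2 =
      2 ^ n * τ ^ 2 / 2 ^ k := by
    rw [hlen]; push_cast; ring
  have hτpos : 0 < τ := by linarith
  have hsmall : t / (6 * (((2 ^ n : ℕ) : ℝ) * (((a : ℝ) + 1) / 2 ^ k - (a : ℝ) / 2 ^ k) * τ ^ 2))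
      ≤ 1 / 20 := by
    rw [hW]
    refine abs_le_of_sq_le_sq' ?_ (by norm_num) |>.2
    have e : (t / (6 * (2 ^ n * τ ^ 2 / 2 ^ k))) ^ 2 =
        (4 / 9) * (q * 4 ^ k * L) / (2 ^ n * τ ^ 2) := by
      rw [div_pow, htsq, show (4 : ℝ) ^ k = (2 ^ k) ^ 2 by rw [← pow_mul, mul_comm, pow_mul]; norm_num]
      field_simp
      ring
    rw [e, div_le_iff₀ (by positivity)]
    have h5 : 3000 * (q * 4 ^ k * L) ≤ 4 * 2 ^ n := by
      refine le_trans ?_ hU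
      rw [mul_left_comm]
      exact mul_le_mul_of_nonneg_left (by linarith) (by positivity)
    have h6 : (1 / 4 : ℝ) ≤ τ ^ 2 := by nlinarith
    have h7 : (2 : ℝ) ^ n * (1 / 4) ≤ 2 ^ n * τ ^ 2 :=
      mul_le_mul_of_nonneg_left h6 (by positivity)
    have h8 : (0 : ℝ) < 2 ^ n := by positivity
    generalize q * 4 ^ k * L = X at h5 ⊢
    generalize (2 : ℝ) ^ n * τ ^ 2 = Y at h7 ⊢
    generalize (2 : ℝ) ^ n = Z at h5 h7 h8
    linarith
  have hmain := disc_tail b hb hτ (u := (a : ℝ) / 2 ^ k) (v := ((a : ℝ) + 1) / 2 ^ k)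
    (by positivity) (by gcongr; linarith) (by
      rw [div_le_one (by positivity)]
      exact_mod_cast (Nat.succ_le_of_lt ha).trans (Nat.pow_le_pow_right (by norm_num) hhk))
    (N := 2 ^ n) (by positivity) ht0 hsmall
  rw [← hL, ← hτ, ← ht]
  refine hmain.trans (ENNReal.ofReal_le_ofReal ?_)
  -- The exponent of `disc_tail` at this level.
  have e1 : t ^ 2 / (12 * (2 ^ n * τ ^ 2 / 2 ^ k)) = (4 / 3) * (q * 2 ^ k) * L := by
    rw [htsq]
    field_simp
    ring
  have e2 : (n : ℝ) ^ (-(1 + 4 * (1 / 2 : ℝ))) * (1 / 2) ^ h * (1 / 2) ^ h =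
      4 * Real.exp (-(3 * Real.log n + (2 * h + 2) * Real.log 2)) := by
    have e3 : (1 / 2 : ℝ) ^ h = Real.exp (-(h * Real.log 2)) := by
      rw [← mul_neg, Real.exp_nat_mul, Real.exp_neg, Real.exp_log two_pos, one_div]
    have e4 : (4 : ℝ) = Real.exp (2 * Real.log 2) := by
      rw [mul_comm, Real.exp_mul, Real.exp_log two_pos]; norm_num
    rw [e3, Real.rpow_def_of_pos hn0]
    conv_rhs => rw [e4]
    rw [← Real.exp_add, ← Real.exp_add, ← Real.exp_add]
    congr 1
    ring
  rw [hW, e1, e2]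
  have h8 : 3 * Real.log n + (2 * h + 2) * Real.log 2 ≤ (4 / 3) * (q * 2 ^ k) * L := by
    have h9 : (4 / 3) * (29 / 10 + (h : ℝ) / 10) * L ≤ (4 / 3) * (q * 2 ^ k) * L := by gcongr
    have h10 := Real.log_two_lt_d9
    have h11 : (2 * (h : ℝ) + 2) * Real.log 2 ≤ (2 * h + 2) * (7 / 10) := by
      gcongr; linarith
    have h12 : (h : ℝ) * 16 ≤ h * L := by gcongr; linarith
    nlinarith
  linarith [Real.exp_le_exp.2 (neg_le_neg h8)]

lemma sum_half_pow_le (T : ℕ) : ∑ h ∈ Finset.Icc 1 T, (1 / 2 : ℝ) ^ h ≤ 1 := by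
  have h : ∑ h ∈ Finset.Icc 1 T, (1 / 2 : ℝ) ^ h = 1 - (1 / 2) ^ T := by
    induction T with
    | zero => simp
    | succ n ih => rw [Finset.sum_Icc_succ_top (by omega), ih, pow_succ]; ring
  rw [h]
  linarith [show (0 : ℝ) ≤ (1 / 2) ^ T by positivity]

theorem stmt13 (b n : ℕ) (hb : 2 ≤ b)
    (hn : Real.exp (6 / ((1 / 2 : ℝ) * Real.log 2)) < (n : ℝ)) :
    MeasureTheory.volume
      (⋃ h ∈ Finset.Icc 1 (Nat.log 4 (2 ^ n) + 1), ⋃ a ∈ Finset.range (2 ^ h),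
        {x ∈ Set.Ioo (0 : ℝ) 1 |
          (2 : ℝ) ^ (-(h : ℝ) / 8) *
              (2 * (1 + 2 * (1 / 2 : ℝ)) * (1 / 2 + 2 / (Real.sqrt b - 1)) *
                Real.sqrt ((2 ^ n : ℝ) * Real.log (Real.log ((2 ^ n : ℕ) : ℝ)))) ≤
            discCount (fun j => Int.fract ((b : ℝ) ^ j * x)) 0 (2 ^ n)
              ((a : ℝ) / 2 ^ (if h < Nat.log 4 (2 ^ n) + 1 then h + 1 else h))
              (((a : ℝ) + 1) / 2 ^ (if h < Nat.log 4 (2 ^ n) + 1 then h + 1 else h))}) ≤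
      ENNReal.ofReal ((n : ℝ) ^ (-(1 + 4 * (1 / 2 : ℝ)))) := by
  have hr : 0 ≤ (n : ℝ) ^ (-(1 + 4 * (1 / 2 : ℝ))) := by positivity
  have hlev : ∀ h ∈ Finset.Icc 1 (Nat.log 4 (2 ^ n) + 1), MeasureTheory.volume
      (⋃ a ∈ Finset.range (2 ^ h),
        {x ∈ Set.Ioo (0 : ℝ) 1 |
          (2 : ℝ) ^ (-(h : ℝ) / 8) *
              (2 * (1 + 2 * (1 / 2 : ℝ)) * (1 / 2 + 2 / (Real.sqrt b - 1)) *
                Real.sqrt ((2 ^ n : ℝ) * Real.log (Real.log ((2 ^ n : ℕ) : ℝ)))) ≤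
            discCount (fun j => Int.fract ((b : ℝ) ^ j * x)) 0 (2 ^ n)
              ((a : ℝ) / 2 ^ (if h < Nat.log 4 (2 ^ n) + 1 then h + 1 else h))
              (((a : ℝ) + 1) / 2 ^ (if h < Nat.log 4 (2 ^ n) + 1 then h + 1 else h))}) ≤
      ENNReal.ofReal ((n : ℝ) ^ (-(1 + 4 * (1 / 2 : ℝ))) * (1 / 2) ^ h) := by
    intro h hh
    rw [Finset.mem_Icc] at hh
    refine (MeasureTheory.measure_biUnion_finset_le _ _).trans
      ((Finset.sum_le_sum fun a ha => level_bound hb hn rfl rfl hh.1 hh.2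
        (Finset.mem_range.1 ha)).trans ?_)
    rw [Finset.sum_const, Finset.card_range, nsmul_eq_mul, ← ENNReal.ofReal_natCast,
      ← ENNReal.ofReal_mul (by positivity)]
    refine ENNReal.ofReal_le_ofReal (le_of_eq ?_)
    have : ((2 ^ h : ℕ) : ℝ) * (1 / 2) ^ h = 1 := by
      push_cast
      rw [← mul_pow]; norm_num
    linear_combination ((n : ℝ) ^ (-(1 + 4 * (1 / 2 : ℝ))) * (1 / 2) ^ h) * this
  refine (MeasureTheory.measure_biUnion_finset_le _ _).trans ((Finset.sum_le_sum hlev).trans ?_)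
  rw [← ENNReal.ofReal_sum_of_nonneg fun h _ => by positivity]
  refine ENNReal.ofReal_le_ofReal ?_
  rw [← Finset.mul_sum]
  refine mul_le_of_le_one_right hr ?_
  exact sum_half_pow_le _
end

section
/- Let θ > 1 be real and (n_j)_{j≥1} a sequence of positive integers with n_{j+1}/n_j ≥ θ for all j. Then for almost every real x (with respect to Lebesgue measure), limsup_{N→∞} D_N(({n_j x} mod 1)_{j≥1})·√N/√(log log N) < 166 + 664/(√θ − 1). -/
/-!
The discrepancy is controlled by sums of `saw α β (n_j x)`, where `saw α β` is the centred indicator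
of `[α, β)` modulo `1`. The proof is an exponential-moment argument over blocks of consecutive
indices, followed by Borel–Cantelli and dyadic chaining in the endpoints.

Distinct frequencies are nearly orthogonal on every interval long compared with their periods
(`abs_integral_saw_mul_saw_le`), so a block of `B` consecutive indices has second moment at most
`w * B * V` times the length of the interval, where `w = β - α` and `V = 2 + 4 / (θ - 1)`
(`integral_blockSum_sq_le`), and a correspondingly bounded exponential moment
(`integral_exp_blockSum_le`).

The indices up to `M = 4 ^ k` are cut into blocks of length `B = C * k` with `θ ^ C ≥ 32`, coloured
alternately. Between consecutive blocks of one colour the frequencies grow by a factor at least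
`2 * M ^ 2`, so there is a mesh which is fine for one block and coarse for the next. On this mesh a
block sum may be replaced by its maximum over each mesh interval, at the cost of widening
`[α, β)` by `1 / M` on each side (`block_step`). Conditioning on the mesh intervals, block after
block, yields the bound `exp (-λ a + 3 + 2 λ² w V M)` for the measure of the set where some partial
sum of block sums exceeds `a` (`volume_maximal_le`, `volume_blocks_le`).

For a dyadic interval of length `2 ^ (-h)` and the threshold `thr V k h`, a suitable `λ` makes this
measure at most `e³ k⁻² 4⁻ʰ` (`volume_dyadic_le`). Summing over the `2 ^ h` intervals, over `h ≤ k`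
and over the two colours gives a convergent series in `k`, so almost every `x` eventually satisfies
all the bounds (`ae_eventually_block_bound`). Chaining along dyadic points (`dyadic_chaining`), where
upper bounds suffice because the increments over `[0, a]` and `[a, 1]` add up to zero, turns these
bounds into a discrepancy estimate (`disc_bound`). The resulting constant is
`24 * V + 111 = 159 + 96 / (θ - 1)`, which is smaller than `166 + 664 / (√θ - 1)`.
-/

open scoped Classical
open Filter

/-- Discrepancy of the first N terms of a sequence (x_j)_{j≥1} in [0,1). -/
noncomputable def seqDisc (x : ℕ → ℝ) (N : ℕ) : ℝ :=
  sSup {d : ℝ | ∃ u v : ℝ, 0 ≤ u ∧ u < v ∧ v ≤ 1 ∧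
    d = |(((Finset.Icc 1 N).filter (fun j => u ≤ x j ∧ x j < v)).card : ℝ) / N - (v - u)|}

namespace LacunaryLIL
open MeasureTheory

/-! ### The centred periodic indicator -/

/-- The centred indicator of `[α, β)` modulo `1`, written with fractional parts so that it is an
increment in the endpoints for arbitrary real `α`, `β`; see `saw_eq_indicator` for the case
`0 ≤ α ≤ β ≤ 1`. -/
noncomputable def saw (α β t : ℝ) : ℝ := Int.fract (t - β) - Int.fract (t - α)

lemma saw_add_length (α β t : ℝ) :
    saw α β t + (β - α) = (⌊t - α⌋ : ℝ) - (⌊t - β⌋ : ℝ) := by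
  unfold saw Int.fract; ring

lemma abs_saw_le (α β t : ℝ) : |saw α β t| ≤ 1 := by
  unfold saw
  rw [abs_le]
  constructor <;>
  linarith [Int.fract_nonneg (t - β), Int.fract_nonneg (t - α), Int.fract_lt_one (t - β),
    Int.fract_lt_one (t - α)]

lemma neg_length_le_saw {α β : ℝ} (h : α ≤ β) (t : ℝ) : -(β - α) ≤ saw α β t := by
  have h1 := saw_add_length α β t
  have h2 : (⌊t - β⌋ : ℝ) ≤ ⌊t - α⌋ := by
    exact_mod_cast Int.floor_le_floor (by linarith)
  linarith

/-- For an interval of length at most `1` the function `saw α β` takes only the two values `-(β - α)`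
and `1 - (β - α)`, so its square is an affine function of it. -/
lemma saw_sq {α β : ℝ} (h : α ≤ β) (h' : β ≤ α + 1) (t : ℝ) :
    saw α β t ^ 2 = (1 - 2 * (β - α)) * saw α β t + (β - α) * (1 - (β - α)) := by
  have h1 := saw_add_length α β t
  have h2 : ⌊t - β⌋ ≤ ⌊t - α⌋ := Int.floor_le_floor (by linarith)
  have h3 : ⌊t - α⌋ ≤ ⌊t - β⌋ + 1 := by
    rw [← Int.floor_add_one]
    exact Int.floor_le_floor (by linarith)
  have h4 : ⌊t - α⌋ = ⌊t - β⌋ ∨ ⌊t - α⌋ = ⌊t - β⌋ + 1 := by omega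
  rcases h4 with h4 | h4
  · have : saw α β t = -(β - α) := by rw [h4] at h1; linarith
    rw [this]; ring
  · have : saw α β t = 1 - (β - α) := by rw [h4] at h1; push_cast at h1; linarith
    rw [this]; ring

lemma saw_eq_indicator {α β : ℝ} (h0 : 0 ≤ α) (h : α ≤ β) (h1 : β ≤ 1) (t : ℝ) :
    saw α β t = (if α ≤ Int.fract t ∧ Int.fract t < β then 1 else 0) - (β - α) := by
  have e := saw_add_length α β t
  have key : ∀ γ : ℝ, 0 ≤ γ → γ ≤ 1 →
      (⌊t - γ⌋ : ℝ) = ⌊t⌋ - (if Int.fract t < γ then 1 else 0) := by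
    intro γ g0 g1
    have a1 := Int.fract_nonneg t
    have a2 := Int.fract_lt_one t
    have a3 := Int.self_sub_floor t
    split_ifs with hc
    · have : ⌊t - γ⌋ = ⌊t⌋ - 1 := by
        rw [Int.floor_eq_iff]; push_cast; constructor <;> linarith
      rw [this]; push_cast; ring
    · have : ⌊t - γ⌋ = ⌊t⌋ := by
        rw [Int.floor_eq_iff]; push Not at hc; constructor <;> linarith
      rw [this]; ring
  rw [key α h0 (h.trans h1), key β (h0.trans h) h1] at e
  have : saw α β t = ((⌊t⌋ : ℝ) - (if Int.fract t < α then 1 else 0)) -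
      (⌊t⌋ - (if Int.fract t < β then 1 else 0)) - (β - α) := by linarith
  rw [this]
  by_cases hα : Int.fract t < α
  · have hβ : Int.fract t < β := by linarith
    have : ¬ α ≤ Int.fract t := by linarith
    simp [hα, hβ, this]
  · have hα' : α ≤ Int.fract t := by linarith
    by_cases hβ : Int.fract t < β <;> simp [hα, hα', hβ]

lemma measurable_saw (α β n : ℝ) : Measurable fun x : ℝ => saw α β (n * x) := by
  unfold saw
  exact (((measurable_id.const_mul n).sub_const β).fract).sub
    (((measurable_id.const_mul n).sub_const α).fract)

/-! ### Integrals of one frequency and of two frequencies -/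

lemma intervalIntegrable_of_bdd {g : ℝ → ℝ} (hg : Measurable g) {C p q : ℝ}
    (hC : ∀ x, |g x| ≤ C) : IntervalIntegrable g volume p q := by
  have h : IntervalIntegrable (fun _ : ℝ => C) volume p q := intervalIntegrable_const
  refine h.mono_fun hg.aestronglyMeasurable (Eventually.of_forall fun x => ?_)
  simpa using (hC x).trans (le_abs_self C)

/-- A mean-zero periodic function has bounded primitive: the integral over any interval, however
long, is at most one period's worth. After the substitution `t = n * x` the integral is a
difference of two integrals of `Int.fract` over intervals of length `β - α`. -/
lemma abs_integral_saw_le {α β n : ℝ} (h : α ≤ β) (hn : 0 < n) (p q : ℝ) :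
    |∫ x in p..q, saw α β (n * x)| ≤ (β - α) / n := by
  have hf : ∀ a b : ℝ, IntervalIntegrable (fun x : ℝ => Int.fract x) volume a b := fun a b =>
    intervalIntegrable_of_bdd measurable_fract (C := 1) fun x => by
      rw [abs_of_nonneg (Int.fract_nonneg x)]; exact (Int.fract_lt_one x).le
  have hf' : ∀ a b c : ℝ, IntervalIntegrable (fun x : ℝ => Int.fract (x - c)) volume a b :=
    fun a b c => intervalIntegrable_of_bdd (measurable_id.sub_const c).fract (C := 1) fun x => by
      rw [abs_of_nonneg (Int.fract_nonneg _)]; exact (Int.fract_lt_one _).le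
  have hb : ∀ c : ℝ, 0 ≤ ∫ x in (c - β)..(c - α), Int.fract x ∧
      ∫ x in (c - β)..(c - α), Int.fract x ≤ β - α := by
    intro c
    have hc : c - β ≤ c - α := by linarith
    refine ⟨intervalIntegral.integral_nonneg hc fun x _ => Int.fract_nonneg x, ?_⟩
    have := intervalIntegral.integral_mono_on hc (hf _ _) (intervalIntegrable_const (c := (1:ℝ)))
      (fun x _ => (Int.fract_lt_one x).le)
    simp at this
    linarith
  rw [intervalIntegral.integral_comp_mul_left (fun t => saw α β t) hn.ne']
  have e : ∫ t in (n * p)..(n * q), saw α β t =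
      (∫ x in (n * p - β)..(n * p - α), Int.fract x) -
      ∫ x in (n * q - β)..(n * q - α), Int.fract x := by
    unfold saw
    rw [intervalIntegral.integral_sub (hf' _ _ _) (hf' _ _ _),
      intervalIntegral.integral_comp_sub_right (fun x => Int.fract x),
      intervalIntegral.integral_comp_sub_right (fun x => Int.fract x)]
    exact intervalIntegral.integral_interval_sub_interval_comm (hf _ _) (hf _ _) (hf _ _)
  rw [e, smul_eq_mul, abs_mul, abs_of_pos (inv_pos.2 hn), div_eq_inv_mul]
  refine mul_le_mul_of_nonneg_left ?_ (inv_pos.2 hn).le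
  rw [abs_le]
  constructor <;> linarith [hb (n * p), hb (n * q)]

/-- Integration by parts (Abel summation) against the step function `⌊n * x - γ⌋`, which makes at
most `n * (q - p) + 1` unit jumps on `[p, q]`: if all tail integrals of `g` are at most `c`, each
jump contributes at most `c`. -/
lemma abs_integral_floor_mul_le {n : ℝ} (hn : 0 < n) (γ : ℝ) {p q C c : ℝ} (hpq : p ≤ q)
    {g : ℝ → ℝ} (hg : Measurable g) (hC : ∀ x, |g x| ≤ C)
    (hc : ∀ r, p ≤ r → r ≤ q → |∫ x in r..q, g x| ≤ c) :
    |∫ x in p..q, ((⌊n * x - γ⌋ : ℝ) - ⌊n * p - γ⌋) * g x| ≤ (n * (q - p) + 1) * c := by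
  have c0 : 0 ≤ c := (abs_nonneg _).trans (hc p le_rfl hpq)
  have hmono : ∀ x y : ℝ, x ≤ y → ⌊n * x - γ⌋ ≤ ⌊n * y - γ⌋ := fun x y hxy =>
    Int.floor_le_floor (by nlinarith)
  obtain ⟨K, hK⟩ := Int.eq_ofNat_of_zero_le (sub_nonneg.2 (hmono p q hpq))
  have hKr : (K : ℝ) ≤ n * (q - p) + 1 := by
    have h1 := Int.floor_le (n * q - γ)
    have h2 := Int.lt_floor_add_one (n * p - γ)
    have h3 : ((⌊n * q - γ⌋ : ℝ) - ⌊n * p - γ⌋) = K := by exact_mod_cast hK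
    linarith
  set φ : ℝ → ℤ := fun x => ⌊n * x - γ⌋ with hφ
  -- the step function is a sum of indicators of the half-lines starting at its jumps
  have hsum : ∀ x ∈ Set.uIcc p q, ((φ x : ℝ) - φ p) * g x =
      ∑ k ∈ Finset.range K, Set.indicator (Set.Ici ((φ p + k + 1 + γ) / n)) g x := by
    intro x hx
    rw [Set.uIcc_of_le hpq] at hx
    obtain ⟨m, hm⟩ := Int.eq_ofNat_of_zero_le (sub_nonneg.2 (hmono p x hx.1))
    have hmK : m ≤ K := by
      have := hmono x q hx.2
      omega
    have h1 : ((φ x : ℝ) - φ p) = m := by exact_mod_cast hm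
    have h2 : ∀ k : ℕ, x ∈ Set.Ici (((φ p : ℝ) + k + 1 + γ) / n) ↔ k < m := by
      intro k
      rw [Set.mem_Ici, div_le_iff₀ hn]
      have : (φ p : ℝ) + k + 1 + γ ≤ x * n ↔ (φ p + k + 1 : ℤ) ≤ φ x := by
        rw [hφ, Int.le_floor]; push_cast
        constructor <;> intro h <;> linarith
      rw [this]
      have : φ x = φ p + m := by linarith
      omega
    simp only [Set.indicator_apply, h2]
    rw [← Finset.sum_filter]
    have : (Finset.range K).filter (fun k => k < m) = Finset.range m := by
      ext k; simp; omega
    rw [this, h1]; simp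
  have hI : ∀ k ∈ Finset.range K, |∫ x in p..q,
      Set.indicator (Set.Ici (((φ p : ℝ) + k + 1 + γ) / n)) g x| ≤ c := by
    intro k hk
    set r := ((φ p : ℝ) + k + 1 + γ) / n with hr
    have hpr : p < r := by
      rw [hr, lt_div_iff₀ hn]
      have := Int.lt_floor_add_one (n * p - γ)
      have hk0 : (0 : ℝ) ≤ k := by positivity
      simp only [hφ]; linarith
    have hrq : r ≤ q := by
      rw [hr, div_le_iff₀ hn]
      have h1 := Int.floor_le (n * q - γ)
      have h3 : ((⌊n * q - γ⌋ : ℝ) - ⌊n * p - γ⌋) = K := by exact_mod_cast hK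
      have h4 : (k : ℝ) + 1 ≤ K := by exact_mod_cast Finset.mem_range.1 hk
      simp only [hφ]; linarith
    rw [intervalIntegral.integral_of_le hpq, setIntegral_indicator measurableSet_Ici]
    have : Set.Ioc p q ∩ Set.Ici r = Set.Icc r q := by
      ext y; simp only [Set.mem_inter_iff, Set.mem_Ioc, Set.mem_Ici, Set.mem_Icc]
      constructor
      · rintro ⟨⟨_, b⟩, d⟩; exact ⟨d, b⟩
      · rintro ⟨a, b⟩; exact ⟨⟨by linarith, b⟩, a⟩
    rw [this, integral_Icc_eq_integral_Ioc, ← intervalIntegral.integral_of_le hrq]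
    exact hc r hpr.le hrq
  rw [intervalIntegral.integral_congr hsum, intervalIntegral.integral_finsetSum]
  · refine (Finset.abs_sum_le_sum_abs _ _).trans ((Finset.sum_le_sum hI).trans ?_)
    simp only [Finset.sum_const, Finset.card_range, nsmul_eq_mul]
    exact mul_le_mul_of_nonneg_right hKr c0
  · intro k _
    refine intervalIntegrable_of_bdd (hg.indicator measurableSet_Ici) (C := C) fun x => ?_
    rw [Set.indicator_apply]
    split_ifs
    · exact hC x
    · simpa using (abs_nonneg _).trans (hC x)

/-- Near-orthogonality of two frequencies, useful for `n` smaller than `m`: `saw α β (n * x)` is a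
constant plus two step functions with at most `n * (q - p) + 1` jumps each, to which
`abs_integral_floor_mul_le` applies. -/
lemma abs_integral_saw_mul_saw_le {α β n m : ℝ} (h : α ≤ β)
    (hn : 0 < n) (hm : 0 < m) {p q : ℝ} (hpq : p ≤ q) :
    |∫ x in p..q, saw α β (n * x) * saw α β (m * x)| ≤
      (β - α) * (2 * n * (q - p) + 3) / m := by
  set g : ℝ → ℝ := fun x => saw α β (m * x) with hg
  have gm : Measurable g := measurable_saw α β m
  have gb : ∀ x, |g x| ≤ 1 := fun x => abs_saw_le _ _ _
  have gi : ∀ r, p ≤ r → r ≤ q → |∫ x in r..q, g x| ≤ (β - α) / m := fun r _ _ =>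
    abs_integral_saw_le h hm r q
  have h1 := abs_integral_floor_mul_le hn α hpq gm gb gi
  have h2 := abs_integral_floor_mul_le hn β hpq gm gb gi
  have h3 := gi p le_rfl hpq
  have hfm : ∀ γ : ℝ, Measurable fun x : ℝ => (⌊n * x - γ⌋ : ℝ) := fun γ => by
    have : Measurable fun x : ℝ => ⌊n * x - γ⌋ :=
      ((measurable_id.const_mul n).sub_const γ).floor
    exact (measurable_from_top (f := fun k : ℤ => (k : ℝ))).comp this
  have hii : ∀ γ : ℝ, IntervalIntegrable
      (fun x => ((⌊n * x - γ⌋ : ℝ) - ⌊n * p - γ⌋) * g x) volume p q := by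
    intro γ
    have hb : IntervalIntegrable (fun x : ℝ => (⌊n * x - γ⌋ : ℝ) - ⌊n * p - γ⌋) volume p q := by
      have hmon : Monotone fun x : ℝ => (⌊n * x - γ⌋ : ℝ) - ⌊n * p - γ⌋ := by
        intro x y hxy
        have : ⌊n * x - γ⌋ ≤ ⌊n * y - γ⌋ := Int.floor_le_floor (by nlinarith)
        have : (⌊n * x - γ⌋ : ℝ) ≤ ⌊n * y - γ⌋ := by exact_mod_cast this
        simp only; linarith
      exact hmon.intervalIntegrable
    exact ⟨hb.1.mul_bdd (c := 1) gm.aestronglyMeasurable (Eventually.of_forall gb),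
      hb.2.mul_bdd (c := 1) gm.aestronglyMeasurable (Eventually.of_forall gb)⟩
  have e : ∀ x, saw α β (n * x) * g x =
      ((⌊n * x - α⌋ : ℝ) - ⌊n * p - α⌋) * g x - ((⌊n * x - β⌋ : ℝ) - ⌊n * p - β⌋) * g x
        + saw α β (n * p) * g x := by
    intro x
    have a := saw_add_length α β (n * x)
    have b := saw_add_length α β (n * p)
    have : saw α β (n * x) = ((⌊n * x - α⌋ : ℝ) - ⌊n * p - α⌋) -
      ((⌊n * x - β⌋ : ℝ) - ⌊n * p - β⌋) + saw α β (n * p) := by linarith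
    rw [this]; ring
  change |∫ x in p..q, saw α β (n * x) * g x| ≤ _
  simp_rw [e]
  have gii : IntervalIntegrable g volume p q := intervalIntegrable_of_bdd gm gb
  rw [intervalIntegral.integral_add ((hii α).sub (hii β)) (gii.const_mul _),
    intervalIntegral.integral_sub (hii α) (hii β), intervalIntegral.integral_const_mul]
  have h4 : |saw α β (n * p) * ∫ x in p..q, g x| ≤ (β - α) / m := by
    rw [abs_mul]
    calc _ ≤ 1 * |∫ x in p..q, g x| :=
          mul_le_mul_of_nonneg_right (abs_saw_le _ _ _) (abs_nonneg _)
      _ ≤ _ := by rw [one_mul]; exact h3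
  calc _ ≤ (n * (q - p) + 1) * ((β - α) / m) + (n * (q - p) + 1) * ((β - α) / m)
        + (β - α) / m :=
        (abs_add_le _ _).trans (add_le_add ((abs_sub _ _).trans (add_le_add h1 h2)) h4)
    _ = _ := by ring

lemma integral_saw_sq_le {α β n : ℝ} (h : α ≤ β) (h' : β ≤ α + 1) (hn : 0 < n) {p q : ℝ}
    (hpq : p ≤ q) :
    ∫ x in p..q, saw α β (n * x) ^ 2 ≤ (β - α) * ((q - p) + 1 / n) := by
  have hi : IntervalIntegrable (fun x => saw α β (n * x)) volume p q :=
    intervalIntegrable_of_bdd (measurable_saw α β n) fun x => abs_saw_le _ _ _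
  simp_rw [saw_sq h h']
  rw [intervalIntegral.integral_add (hi.const_mul _) intervalIntegrable_const,
    intervalIntegral.integral_const_mul, intervalIntegral.integral_const, smul_eq_mul]
  have h1 := abs_integral_saw_le h hn p q
  have h2 : (1 - 2 * (β - α)) * ∫ x in p..q, saw α β (n * x) ≤ (β - α) / n := by
    refine (le_abs_self _).trans ?_
    rw [abs_mul]
    have : |1 - 2 * (β - α)| ≤ 1 := by rw [abs_le]; constructor <;> linarith
    calc _ ≤ 1 * |∫ x in p..q, saw α β (n * x)| :=
          mul_le_mul_of_nonneg_right this (abs_nonneg _)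
      _ ≤ _ := by rw [one_mul]; exact h1
  have h3 : (q - p) * ((β - α) * (1 - (β - α))) ≤ (q - p) * (β - α) := by
    refine mul_le_mul_of_nonneg_left ?_ (by linarith)
    nlinarith
  calc _ ≤ (β - α) / n + (q - p) * (β - α) := add_le_add h2 h3
    _ = _ := by ring

/-! ### Second moment and exponential moment of a block -/

/-- The sum of `saw α β (ν j * x)` over the block of indices `s ≤ j < s + B`. -/
noncomputable def blockSum (ν : ℕ → ℝ) (s B : ℕ) (α β x : ℝ) : ℝ :=
  ∑ i ∈ Finset.range B, saw α β (ν (s + i) * x)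

lemma measurable_blockSum (ν : ℕ → ℝ) (s B : ℕ) (α β : ℝ) :
    Measurable (blockSum ν s B α β) := by
  unfold blockSum
  exact Finset.measurable_sum _ fun i _ => measurable_saw α β (ν (s + i))

lemma abs_blockSum_le (ν : ℕ → ℝ) (s B : ℕ) (α β x : ℝ) : |blockSum ν s B α β x| ≤ B := by
  unfold blockSum
  refine (Finset.abs_sum_le_sum_abs _ _).trans ?_
  calc _ ≤ ∑ i ∈ Finset.range B, (1 : ℝ) := Finset.sum_le_sum fun i _ => abs_saw_le _ _ _
    _ = B := by simp

lemma lacunary_monotone {ν : ℕ → ℝ} {θ : ℝ} (hθ : 1 < θ) (hpos : ∀ j, 0 < ν j)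
    (hlac : ∀ j, θ * ν j ≤ ν (j + 1)) : Monotone ν :=
  monotone_nat_of_le_succ fun j => by nlinarith [hpos j, hlac j]

lemma lacunary_pow {ν : ℕ → ℝ} {θ : ℝ} (hθ : 1 < θ)
    (hlac : ∀ j, θ * ν j ≤ ν (j + 1)) (s m : ℕ) : θ ^ m * ν s ≤ ν (s + m) := by
  induction m with
  | zero => simp
  | succ m ih =>
    calc θ ^ (m + 1) * ν s = θ * (θ ^ m * ν s) := by ring
      _ ≤ θ * ν (s + m) := mul_le_mul_of_nonneg_left ih (by linarith)
      _ ≤ _ := hlac (s + m)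

lemma lacunary_sum {ν : ℕ → ℝ} {θ : ℝ} (hθ : 1 < θ) (hpos : ∀ j, 0 < ν j)
    (hlac : ∀ j, θ * ν j ≤ ν (j + 1)) (s m : ℕ) :
    ∑ i ∈ Finset.range m, ν (s + i) ≤ ν (s + m) / (θ - 1) := by
  have h1 : 0 < θ - 1 := by linarith
  induction m with
  | zero => simpa using div_nonneg (hpos s).le h1.le
  | succ m ih =>
    rw [Finset.sum_range_succ]
    have h2 := hlac (s + m)
    calc _ ≤ ν (s + m) / (θ - 1) + ν (s + m) := by linarith
      _ = θ * ν (s + m) / (θ - 1) := by field_simp; ring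
      _ ≤ ν (s + m + 1) / (θ - 1) := by gcongr

/-- The second moment of a block over an interval containing many periods of its lowest frequency
is linear in the length of the block, by near-orthogonality and the geometric growth of `ν`. -/
lemma integral_blockSum_sq_le {ν : ℕ → ℝ} {θ : ℝ} (hθ : 1 < θ) (hpos : ∀ j, 0 < ν j)
    (hlac : ∀ j, θ * ν j ≤ ν (j + 1)) {α β p q : ℝ} (h : α ≤ β) (h' : β ≤ α + 1) (hpq : p ≤ q)
    {s B : ℕ} (hB : 7 * B ≤ ν s * (q - p)) {m : ℕ} (hm : m ≤ B) :
    ∫ x in p..q, blockSum ν s m α β x ^ 2 ≤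
      (β - α) * (q - p) * (2 + 4 / (θ - 1)) * m := by
  have h1 : 0 < θ - 1 := by linarith
  induction m with
  | zero => simp [blockSum]
  | succ m ih =>
    have ih := ih (by omega)
    have hν := hpos (s + m)
    have hmono : ν s ≤ ν (s + m) := lacunary_monotone hθ hpos hlac (by omega)
    set f : ℝ → ℝ := fun x => saw α β (ν (s + m) * x) with hf
    have fm : Measurable f := measurable_saw _ _ _
    have fb : ∀ x, |f x| ≤ 1 := fun x => abs_saw_le _ _ _
    have e : ∀ x, blockSum ν s (m + 1) α β x ^ 2 = blockSum ν s m α β x ^ 2 +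
        2 * (∑ i ∈ Finset.range m, saw α β (ν (s + i) * x) * f x) + f x ^ 2 := by
      intro x
      rw [← Finset.sum_mul]
      unfold blockSum
      rw [Finset.sum_range_succ]
      simp only [hf]
      ring
    have i1 : IntervalIntegrable (fun x => blockSum ν s m α β x ^ 2) volume p q := by
      refine intervalIntegrable_of_bdd ((measurable_blockSum ν s m α β).pow_const 2)
        (C := (m : ℝ) ^ 2) fun x => ?_
      rw [abs_pow]
      exact pow_le_pow_left₀ (abs_nonneg _) (abs_blockSum_le _ _ _ _ _ _) 2
    have i2 : ∀ i ∈ Finset.range m,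
        IntervalIntegrable (fun x => saw α β (ν (s + i) * x) * f x) volume p q := by
      intro i _
      refine intervalIntegrable_of_bdd ((measurable_saw _ _ _).mul fm) (C := 1) fun x => ?_
      rw [Pi.mul_apply, abs_mul]
      exact mul_le_one₀ (abs_saw_le _ _ _) (abs_nonneg _) (fb x)
    have i3 : IntervalIntegrable (fun x => f x ^ 2) volume p q := by
      refine intervalIntegrable_of_bdd (fm.pow_const 2) (C := 1) fun x => ?_
      rw [abs_pow]
      exact pow_le_one₀ (abs_nonneg _) (fb x)
    have i4 : IntervalIntegrable
        (fun x => ∑ i ∈ Finset.range m, saw α β (ν (s + i) * x) * f x) volume p q := by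
      refine intervalIntegrable_of_bdd (Finset.measurable_sum _ fun i _ =>
        (measurable_saw α β (ν (s + i))).mul fm) (C := m) fun x => ?_
      refine (Finset.abs_sum_le_sum_abs _ _).trans ?_
      calc _ ≤ ∑ i ∈ Finset.range m, (1 : ℝ) := Finset.sum_le_sum fun i _ => by
            rw [Pi.mul_apply, abs_mul]
            exact mul_le_one₀ (abs_saw_le _ _ _) (abs_nonneg _) (fb x)
        _ = m := by simp
    simp_rw [e]
    rw [intervalIntegral.integral_add (i1.add (i4.const_mul 2)) i3,
      intervalIntegral.integral_add i1 (i4.const_mul 2), intervalIntegral.integral_const_mul,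
      intervalIntegral.integral_finsetSum i2]
    have b1 : ∑ i ∈ Finset.range m, ∫ x in p..q, saw α β (ν (s + i) * x) * f x ≤
        ∑ i ∈ Finset.range m, (β - α) * (2 * ν (s + i) * (q - p) + 3) / ν (s + m) :=
      Finset.sum_le_sum fun i _ => (le_abs_self _).trans
        (abs_integral_saw_mul_saw_le h (hpos _) hν hpq)
    have b2 : ∑ i ∈ Finset.range m, (β - α) * (2 * ν (s + i) * (q - p) + 3) / ν (s + m) =
        (β - α) / ν (s + m) * (2 * (q - p) * (∑ i ∈ Finset.range m, ν (s + i)) + 3 * m) := by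
      rw [Finset.mul_sum, show (3 : ℝ) * m = ∑ i ∈ Finset.range m, (3 : ℝ) by
        simp [mul_comm], ← Finset.sum_add_distrib, Finset.mul_sum]
      refine Finset.sum_congr rfl fun i _ => ?_
      ring
    have b3 := integral_saw_sq_le h h' hν hpq
    have b4 := lacunary_sum hθ hpos hlac s m
    have hw : 0 ≤ β - α := by linarith
    have hD : 0 ≤ q - p := by linarith
    have hm' : (m : ℝ) + 1 ≤ B := by exact_mod_cast hm
    have b5 : (β - α) / ν (s + m) * (2 * (q - p) * (∑ i ∈ Finset.range m, ν (s + i)) + 3 * m) ≤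
        (β - α) / ν (s + m) * (2 * (q - p) * (ν (s + m) / (θ - 1)) + 3 * m) := by
      gcongr
    have b6 : (7 * B : ℝ) ≤ ν (s + m) * (q - p) :=
      hB.trans (mul_le_mul_of_nonneg_right hmono hD)
    have b7 : (β - α) * ((6 * m + 1) / ν (s + m)) ≤ (β - α) * (q - p) := by
      refine mul_le_mul_of_nonneg_left ?_ hw
      rw [div_le_iff₀ hν]
      linarith
    have b8 : 2 * ((β - α) / ν (s + m) * (2 * (q - p) * (ν (s + m) / (θ - 1)) + 3 * m)) +
        (β - α) * ((q - p) + 1 / ν (s + m)) =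
        (β - α) * (q - p) * (1 + 4 / (θ - 1)) + (β - α) * ((6 * m + 1) / ν (s + m)) := by
      field_simp
      ring
    push_cast
    calc _ ≤ (β - α) * (q - p) * (2 + 4 / (θ - 1)) * m +
          (2 * ((β - α) / ν (s + m) * (2 * (q - p) * (ν (s + m) / (θ - 1)) + 3 * m)) +
          (β - α) * ((q - p) + 1 / ν (s + m))) := by
          linarith
      _ ≤ _ := by
          rw [b8]
          linarith

/-- Exponential moment of a block, from `exp u ≤ 1 + u + u ^ 2` for `|u| ≤ 1` and the bounds on the
first two moments. -/
lemma integral_exp_blockSum_le {ν : ℕ → ℝ} {θ : ℝ} (hθ : 1 < θ) (hpos : ∀ j, 0 < ν j)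
    (hlac : ∀ j, θ * ν j ≤ ν (j + 1)) {α β p q : ℝ} (h : α ≤ β) (h' : β ≤ α + 1) (hpq : p ≤ q)
    {s B : ℕ} {M : ℝ} (hM : 0 < M) (hB : 7 * B ≤ M) (hMν : M ≤ ν s * (q - p))
    {lam : ℝ} (hl : 0 ≤ lam) (hlB : lam * B ≤ 1) :
    ∫ x in p..q, Real.exp (lam * blockSum ν s B α β x) ≤
      (q - p) * Real.exp (lam * (β - α) * B / M +
        lam ^ 2 * (β - α) * B * (2 + 4 / (θ - 1))) := by
  have hw : 0 ≤ β - α := by linarith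
  have hD : 0 ≤ q - p := by linarith
  have hbd : ∀ x, |lam * blockSum ν s B α β x| ≤ 1 := by
    intro x
    rw [abs_mul, abs_of_nonneg hl]
    exact (mul_le_mul_of_nonneg_left (abs_blockSum_le _ _ _ _ _ _) hl).trans hlB
  have Tm := measurable_blockSum ν s B α β
  have i0 : IntervalIntegrable (blockSum ν s B α β) volume p q :=
    intervalIntegrable_of_bdd Tm (abs_blockSum_le ν s B α β)
  have i1 : IntervalIntegrable (fun x => blockSum ν s B α β x ^ 2) volume p q := by
    refine intervalIntegrable_of_bdd (Tm.pow_const 2) (C := (B : ℝ) ^ 2) fun x => ?_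
    rw [abs_pow]
    exact pow_le_pow_left₀ (abs_nonneg _) (abs_blockSum_le _ _ _ _ _ _) 2
  have i2 : IntervalIntegrable (fun x => Real.exp (lam * blockSum ν s B α β x)) volume p q := by
    refine intervalIntegrable_of_bdd (Real.measurable_exp.comp (Tm.const_mul lam))
      (C := Real.exp 1) fun x => ?_
    rw [Function.comp_apply, Real.abs_exp]
    exact Real.exp_le_exp.2 ((le_abs_self _).trans (hbd x))
  have i3 : IntervalIntegrable (fun x => 1 + lam * blockSum ν s B α β x +
      lam ^ 2 * blockSum ν s B α β x ^ 2) volume p q :=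
    (intervalIntegrable_const.add (i0.const_mul lam)).add (i1.const_mul _)
  have hle := intervalIntegral.integral_mono_on hpq i2 i3 fun x _ => by
    have := Real.abs_exp_sub_one_sub_id_le (hbd x)
    have := (le_abs_self _).trans this
    rw [mul_pow] at this
    linarith
  rw [intervalIntegral.integral_add (intervalIntegrable_const.add (i0.const_mul lam))
    (i1.const_mul _), intervalIntegral.integral_add intervalIntegrable_const (i0.const_mul lam),
    intervalIntegral.integral_const_mul, intervalIntegral.integral_const_mul,
    intervalIntegral.integral_const, smul_eq_mul, mul_one] at hle
  have m2 := integral_blockSum_sq_le hθ hpos hlac h h' hpq (hB.trans hMν) le_rfl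
  have m1 : ∫ x in p..q, blockSum ν s B α β x ≤ (q - p) * ((β - α) * B / M) := by
    unfold blockSum
    rw [intervalIntegral.integral_finsetSum fun i _ =>
      intervalIntegrable_of_bdd (measurable_saw _ _ _) fun x => abs_saw_le _ _ _]
    have : ∀ i ∈ Finset.range B, ∫ x in p..q, saw α β (ν (s + i) * x) ≤
        (q - p) * ((β - α) / M) := by
      intro i _
      refine (le_abs_self _).trans ((abs_integral_saw_le h (hpos _) p q).trans ?_)
      have hmono : ν s ≤ ν (s + i) := lacunary_monotone hθ hpos hlac (by omega)
      rw [← mul_div_assoc, div_le_div_iff₀ (hpos _) hM]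
      have : M ≤ ν (s + i) * (q - p) := hMν.trans (mul_le_mul_of_nonneg_right hmono hD)
      nlinarith [mul_le_mul_of_nonneg_left this hw]
    refine (Finset.sum_le_sum this).trans (le_of_eq ?_)
    simp only [Finset.sum_const, Finset.card_range, nsmul_eq_mul]
    ring
  have h1 := mul_le_mul_of_nonneg_left m1 hl
  have h2 := mul_le_mul_of_nonneg_left m2 (sq_nonneg lam)
  calc _ ≤ (q - p) * (lam * (β - α) * B / M +
        lam ^ 2 * (β - α) * B * (2 + 4 / (θ - 1)) + 1) := by
        refine hle.trans ?_
        have e : (q - p) * (lam * (β - α) * B / M +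
          lam ^ 2 * (β - α) * B * (2 + 4 / (θ - 1)) + 1) = (q - p) +
          lam * ((q - p) * ((β - α) * B / M)) +
          lam ^ 2 * ((β - α) * (q - p) * (2 + 4 / (θ - 1)) * B) := by ring
        rw [e]
        linarith
    _ ≤ _ := mul_le_mul_of_nonneg_left (Real.add_one_le_exp _) hD

/-! ### The maximal inequality -/

/-- An abstract exponential maximal inequality, playing the role of Doob's inequality. The
hypothesis says that an interval at scale `ℓ t` can be cut into `K` equal pieces, still at scale
`ℓ (t + 1)`, on each of which `T t` is below a constant `τ i`, with the averages of
`exp (lam * τ i)` at most `Q`. On the `i`-th piece the threshold `a` for the partial sums becomes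
`a - τ i` for the remaining ones, and induction on the number of summands applies. A threshold
`a ≤ 0` is trivial because the bound then exceeds the length of the interval. -/
lemma volume_maximal_le {T : ℕ → ℝ → ℝ} {ℓ : ℕ → ℝ} {lam Q : ℝ} (hl : 0 ≤ lam) (hQ : 1 ≤ Q)
    (hstep : ∀ t p q, p < q → ℓ t ≤ q - p → ∃ (K : ℕ) (τ : ℕ → ℝ), 0 < K ∧
      ℓ (t + 1) ≤ (q - p) / K ∧
      (∀ i < K, ∀ x ∈ Set.Ico (p + i * ((q - p) / K)) (p + (i + 1) * ((q - p) / K)),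
        T t x ≤ τ i) ∧
      ∑ i ∈ Finset.range K, (q - p) / K * Real.exp (lam * τ i) ≤ (q - p) * Q)
    (m : ℕ) : ∀ (t : ℕ) (p q a : ℝ), p < q → ℓ t ≤ q - p →
      volume {x | x ∈ Set.Ico p q ∧ ∃ r ≤ m, a ≤ ∑ i ∈ Finset.range r, T (t + i) x} ≤
        ENNReal.ofReal ((q - p) * (Real.exp (-(lam * a)) * Q ^ m)) := by
  have triv : ∀ (m t : ℕ) (p q a : ℝ), p < q → a ≤ 0 →
      volume {x | x ∈ Set.Ico p q ∧ ∃ r ≤ m, a ≤ ∑ i ∈ Finset.range r, T (t + i) x} ≤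
        ENNReal.ofReal ((q - p) * (Real.exp (-(lam * a)) * Q ^ m)) := by
    intro m t p q a hpq ha
    refine (measure_mono (fun x hx => hx.1)).trans ?_
    rw [Real.volume_Ico]
    refine ENNReal.ofReal_le_ofReal ?_
    have h1 : 1 ≤ Real.exp (-(lam * a)) := Real.one_le_exp (by nlinarith)
    have h2 : 1 ≤ Q ^ m := one_le_pow₀ hQ
    exact le_mul_of_one_le_right (by linarith) (one_le_mul_of_one_le_of_one_le h1 h2)
  induction m with
  | zero =>
    intro t p q a hpq hℓ
    by_cases ha : a ≤ 0
    · exact triv 0 t p q a hpq ha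
    · have : {x | x ∈ Set.Ico p q ∧ ∃ r ≤ 0, a ≤ ∑ i ∈ Finset.range r, T (t + i) x} = ∅ := by
        ext x
        simp only [Set.mem_ofPred_eq, Set.mem_empty_iff_false, iff_false]
        rintro ⟨_, r, hr, h⟩
        obtain rfl : r = 0 := by omega
        simp at h; exact ha h
      rw [this]; simp
  | succ m ih =>
    intro t p q a hpq hℓ
    by_cases ha : a ≤ 0
    · exact triv (m + 1) t p q a hpq ha
    obtain ⟨K, τ, hK, hℓ', hτ, hsum⟩ := hstep t p q hpq hℓ
    have hKr : (0 : ℝ) < K := by exact_mod_cast hK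
    set d := (q - p) / K with hd
    have hdpos : 0 < d := div_pos (by linarith) hKr
    have hdK : d * K = q - p := by rw [hd]; field_simp
    have hcover : {x | x ∈ Set.Ico p q ∧
        ∃ r ≤ m + 1, a ≤ ∑ i ∈ Finset.range r, T (t + i) x} ⊆
        ⋃ i ∈ Finset.range K, {x | x ∈ Set.Ico (p + i * d) (p + (i + 1) * d) ∧
          ∃ r ≤ m, a - τ i ≤ ∑ j ∈ Finset.range r, T (t + 1 + j) x} := by
      rintro x ⟨hx, r, hr, har⟩
      have hx0 : 0 ≤ (x - p) / d := div_nonneg (by linarith [hx.1]) hdpos.le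
      set i := ⌊(x - p) / d⌋₊ with hi
      have h1 : (i : ℝ) ≤ (x - p) / d := Nat.floor_le hx0
      have h2 : (x - p) / d < i + 1 := Nat.lt_floor_add_one _
      rw [le_div_iff₀ hdpos] at h1
      rw [div_lt_iff₀ hdpos] at h2
      have hiK : i < K := by
        have : (i : ℝ) < K := by
          by_contra hcon
          push Not at hcon
          have := mul_le_mul_of_nonneg_right hcon hdpos.le
          linarith [hx.2]
        exact_mod_cast this
      have hxi : x ∈ Set.Ico (p + i * d) (p + (i + 1) * d) := ⟨by linarith, by linarith⟩
      simp only [Set.mem_iUnion, Finset.mem_range]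
      refine ⟨i, hiK, hxi, ?_⟩
      -- the empty sum does not reach the positive threshold, so the first block can be split off
      have hr0 : r ≠ 0 := by
        rintro rfl
        simp at har; exact ha har
      obtain ⟨r', rfl⟩ := Nat.exists_eq_succ_of_ne_zero hr0
      refine ⟨r', by omega, ?_⟩
      rw [Finset.sum_range_succ'] at har
      have := hτ i hiK x hxi
      have e : ∑ j ∈ Finset.range r', T (t + 1 + j) x =
          ∑ j ∈ Finset.range r', T (t + (j + 1)) x :=
        Finset.sum_congr rfl fun j _ => by rw [show t + 1 + j = t + (j + 1) by ring]
      rw [e]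
      simp only [add_zero] at har
      linarith
    refine (measure_mono hcover).trans ((measure_biUnion_finset_le _ _).trans ?_)
    have hpiece : ∀ i ∈ Finset.range K, volume {x | x ∈ Set.Ico (p + i * d) (p + (i + 1) * d) ∧
          ∃ r ≤ m, a - τ i ≤ ∑ j ∈ Finset.range r, T (t + 1 + j) x} ≤
        ENNReal.ofReal (d * Real.exp (lam * τ i) * (Real.exp (-(lam * a)) * Q ^ m)) := by
      intro i _
      have e : p + (i + 1) * d - (p + i * d) = d := by ring
      refine (ih (t + 1) (p + i * d) (p + (i + 1) * d) (a - τ i) (by linarith)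
        (by rw [e]; exact hℓ')).trans (le_of_eq ?_)
      rw [e, show -(lam * (a - τ i)) = lam * τ i + -(lam * a) by ring, Real.exp_add]
      congr 1; ring
    refine (Finset.sum_le_sum hpiece).trans ?_
    rw [← ENNReal.ofReal_sum_of_nonneg fun i _ => by positivity]
    refine ENNReal.ofReal_le_ofReal ?_
    rw [← Finset.sum_mul]
    calc _ ≤ (q - p) * Q * (Real.exp (-(lam * a)) * Q ^ m) :=
          mul_le_mul_of_nonneg_right hsum (by positivity)
      _ = _ := by ring

/-- The hypothesis of `volume_maximal_le` for blocks: the mesh of the subdivision of `[p, q)` is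
about `1 / (M * ν (σ + B))`, so fine that the frequencies of this block move by at most `1 / M` on
one piece, yet coarse for the frequencies beyond a gap of `B` indices. The bound `τ i` is the block
sum with both endpoints rounded outwards; it is at most a block sum for the widened interval
`[α - 1 / M, β + 1 / M)`, whose exponential moment is known. -/
lemma block_step {ν : ℕ → ℝ} {θ : ℝ} (hθ : 1 < θ)
    (hpos : ∀ j, 0 < ν j) (hlac : ∀ j, θ * ν j ≤ ν (j + 1)) {α β M lam : ℝ}
    {B : ℕ} (hM1 : 1 ≤ M) (hαβ : 2 / M ≤ β - α) (hw1 : β - α ≤ 1 / 2)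
    (hB : 7 * B ≤ M) (hgap : 2 * M ^ 2 ≤ θ ^ B)
    (hl : 0 ≤ lam) (hl1 : lam ≤ 1) (hlB : lam * B ≤ 1) (σ : ℕ) {p q : ℝ}
    (hpq : p < q) (hℓ : M / ν σ ≤ q - p) :
    ∃ (K : ℕ) (τ : ℕ → ℝ), 0 < K ∧
      M / ν (σ + 2 * B) ≤ (q - p) / K ∧
      (∀ i < K, ∀ x ∈ Set.Ico (p + i * ((q - p) / K)) (p + (i + 1) * ((q - p) / K)),
        blockSum ν σ B α β x ≤ τ i) ∧
      ∑ i ∈ Finset.range K, (q - p) / K * Real.exp (lam * τ i) ≤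
        (q - p) * Real.exp (B * (3 / M + 2 * lam ^ 2 * (β - α) * (2 + 4 / (θ - 1)))) := by
  have hM : 0 < M := by linarith
  have hmono := lacunary_monotone hθ hpos hlac
  have hV : 0 ≤ 2 + 4 / (θ - 1) := by
    have : 0 < θ - 1 := by linarith
    positivity
  have hw0 : 0 ≤ β - α := le_trans (by positivity) hαβ
  set V := 2 + 4 / (θ - 1) with hVdef
  set Q := Real.exp (B * (3 / M + 2 * lam ^ 2 * (β - α) * V)) with hQ
  set N := ν (σ + B) with hN
  have hNpos : 0 < N := hpos _
  have hσN : ν σ ≤ N := hmono (by omega)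
  have hℓ' : M ≤ ν σ * (q - p) := by
    rw [div_le_iff₀ (hpos _)] at hℓ; linarith
  have hy1 : 1 ≤ (q - p) * M * N := by
    have : M ≤ N * (q - p) :=
      hℓ'.trans (mul_le_mul_of_nonneg_right hσN (by linarith))
    nlinarith
  set K := ⌈(q - p) * M * N⌉₊ with hK
  have hK1 : (q - p) * M * N ≤ K := Nat.le_ceil _
  have hK2 : (K : ℝ) ≤ 2 * ((q - p) * M * N) := by
    have := Nat.ceil_lt_add_one (show 0 ≤ (q - p) * M * N by linarith)
    linarith
  have hKr : (0 : ℝ) < K := by linarith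
  set d := (q - p) / K with hd
  have hdpos : 0 < d := div_pos (by linarith) hKr
  have hdK : d * K = q - p := by rw [hd]; field_simp
  -- the mesh is fine enough that each frequency of the block moves by at most `1 / M`
  have hdN : N * d ≤ 1 / M := by
    rw [hd, ← mul_div_assoc, div_le_div_iff₀ hKr hM]; linarith
  -- and coarse compared with the frequencies of the next block
  have hdl : M / ν (σ + 2 * B) ≤ d := by
    rw [hd, div_le_div_iff₀ (hpos _) hKr]
    have h1 : θ ^ B * N ≤ ν (σ + 2 * B) := by
      have := lacunary_pow hθ hlac (σ + B) B
      rwa [show σ + B + B = σ + 2 * B by ring] at this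
    have h2 : 2 * M ^ 2 * N ≤ ν (σ + 2 * B) :=
      (mul_le_mul_of_nonneg_right hgap hNpos.le).trans h1
    have h3 := mul_le_mul_of_nonneg_left hK2 hM.le
    have h4 := mul_le_mul_of_nonneg_left h2 (show 0 ≤ q - p by linarith)
    calc M * K ≤ (q - p) * (2 * M ^ 2 * N) := by linarith
      _ ≤ _ := h4
  -- both endpoints rounded outwards: a bound for the block sum on the whole `i`-th piece
  let τ : ℕ → ℝ := fun i => ∑ j ∈ Finset.range B,
    ((⌊ν (σ + j) * (p + (i + 1) * d) - α⌋ : ℝ) - ⌊ν (σ + j) * (p + i * d) - β⌋ - (β - α))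
  refine ⟨K, τ, by exact_mod_cast hKr, hdl, ?_, ?_⟩
  · intro i _ x hx
    refine Finset.sum_le_sum fun j _ => ?_
    have e := saw_add_length α β (ν (σ + j) * x)
    have hj := hpos (σ + j)
    have h1 : ⌊ν (σ + j) * x - α⌋ ≤ ⌊ν (σ + j) * (p + (i + 1) * d) - α⌋ :=
      Int.floor_le_floor (by nlinarith [hx.2])
    have h2 : ⌊ν (σ + j) * (p + i * d) - β⌋ ≤ ⌊ν (σ + j) * x - β⌋ :=
      Int.floor_le_floor (by nlinarith [hx.1])
    have h1' : (⌊ν (σ + j) * x - α⌋ : ℝ) ≤ ⌊ν (σ + j) * (p + (i + 1) * d) - α⌋ := by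
      exact_mod_cast h1
    have h2' : (⌊ν (σ + j) * (p + i * d) - β⌋ : ℝ) ≤ ⌊ν (σ + j) * x - β⌋ := by
      exact_mod_cast h2
    linarith
  set α' := α - 1 / M with hα'
  set β' := β + 1 / M with hβ'
  have hww : β' - α' = (β - α) + 2 / M := by rw [hα', hβ']; ring
  have hτ : ∀ i : ℕ, ∀ x ∈ Set.Icc (p + i * d) (p + (i + 1) * d),
      τ i ≤ blockSum ν σ B α' β' x + 2 / M * B := by
    intro i x hx
    have : blockSum ν σ B α' β' x + 2 / M * B =
        ∑ j ∈ Finset.range B, (saw α' β' (ν (σ + j) * x) + 2 / M) := by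
      rw [Finset.sum_add_distrib]; simp [blockSum, mul_comm]
    rw [this]
    refine Finset.sum_le_sum fun j hj => ?_
    have e := saw_add_length α' β' (ν (σ + j) * x)
    have hj' := hpos (σ + j)
    have hjN : ν (σ + j) * d ≤ 1 / M := (mul_le_mul_of_nonneg_right
      (hmono (by have := Finset.mem_range.1 hj; omega)) hdpos.le).trans hdN
    have h1 : ⌊ν (σ + j) * (p + (i + 1) * d) - α⌋ ≤ ⌊ν (σ + j) * x - α'⌋ := by
      refine Int.floor_le_floor ?_
      have := mul_le_mul_of_nonneg_left hx.1 hj'.le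
      rw [hα']
      linarith
    have h2 : ⌊ν (σ + j) * x - β'⌋ ≤ ⌊ν (σ + j) * (p + i * d) - β⌋ := by
      refine Int.floor_le_floor ?_
      have := mul_le_mul_of_nonneg_left hx.2 hj'.le
      rw [hβ']
      linarith
    have h1' : (⌊ν (σ + j) * (p + (i + 1) * d) - α⌋ : ℝ) ≤ ⌊ν (σ + j) * x - α'⌋ := by
      exact_mod_cast h1
    have h2' : (⌊ν (σ + j) * x - β'⌋ : ℝ) ≤ ⌊ν (σ + j) * (p + i * d) - β⌋ := by
      exact_mod_cast h2
    rw [hww] at e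
    linarith
  set G : ℝ → ℝ := fun x => Real.exp (lam * blockSum ν σ B α' β' x) with hG
  have hGi : ∀ b c : ℝ, IntervalIntegrable G volume b c := by
    intro b c
    refine intervalIntegrable_of_bdd
      (Real.measurable_exp.comp ((measurable_blockSum ν σ B α' β').const_mul lam))
      (C := Real.exp (lam * B)) fun x => ?_
    rw [Function.comp_apply, Real.abs_exp]
    exact Real.exp_le_exp.2 (mul_le_mul_of_nonneg_left
      ((le_abs_self _).trans (abs_blockSum_le _ _ _ _ _ _)) hl)
  have hpiece : ∀ i ∈ Finset.range K, d * Real.exp (lam * τ i) ≤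
      Real.exp (lam * (2 / M * B)) * ∫ x in (p + (i : ℕ) * d)..(p + ((i + 1 : ℕ) : ℝ) * d), G x := by
    intro i _
    rw [← intervalIntegral.integral_const_mul]
    have hle : p + (i : ℝ) * d ≤ p + ((i + 1 : ℕ) : ℝ) * d := by push_cast; linarith
    have := intervalIntegral.integral_mono_on hle
      (intervalIntegrable_const (c := Real.exp (lam * τ i)))
      ((hGi _ _).const_mul (Real.exp (lam * (2 / M * B)))) fun x hx => by
        rw [hG, ← Real.exp_add]
        refine Real.exp_le_exp.2 ?_
        have := mul_le_mul_of_nonneg_left (hτ i x (by push_cast at hx; exact hx)) hl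
        linarith
    rw [intervalIntegral.integral_const, smul_eq_mul] at this
    refine le_trans (le_of_eq ?_) this
    push_cast; ring
  refine (Finset.sum_le_sum hpiece).trans ?_
  rw [← Finset.mul_sum, intervalIntegral.sum_integral_adjacent_intervals
    (a := fun i : ℕ => p + (i : ℝ) * d) fun i _ => hGi _ _]
  have e1 : p + ((0 : ℕ) : ℝ) * d = p := by simp
  have e2 : p + (K : ℝ) * d = q := by linarith
  simp only [e1, e2]
  have h2M : 0 < 2 / M := by positivity
  have hexp := integral_exp_blockSum_le hθ hpos hlac (α := α') (β := β') (by linarith)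
    (by linarith) hpq.le hM hB hℓ' hl hlB
  calc _ ≤ Real.exp (lam * (2 / M * B)) * ((q - p) * Real.exp (lam * (β' - α') * B / M +
      lam ^ 2 * (β' - α') * B * V)) := mul_le_mul_of_nonneg_left hexp (Real.exp_pos _).le
    _ = (q - p) * Real.exp (lam * (2 / M * B) + (lam * (β' - α') * B / M +
      lam ^ 2 * (β' - α') * B * V)) := by rw [Real.exp_add (lam * (2 / M * B))]; ring
    _ ≤ (q - p) * Q := by
      refine mul_le_mul_of_nonneg_left (Real.exp_le_exp.2 ?_) (by linarith)
      have hw' : β' - α' ≤ 2 * (β - α) := by linarith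
      have hw'' : β' - α' ≤ 1 := by linarith
      have b1 : lam * (2 / M * B) ≤ 1 * (2 / M * B) :=
        mul_le_mul_of_nonneg_right hl1 (by positivity)
      have b2 : lam * (β' - α') * B / M ≤ 1 * B / M := by
        gcongr
        exact mul_le_one₀ hl1 (by linarith) hw''
      have b3 : lam ^ 2 * (β' - α') * B * V ≤ lam ^ 2 * (2 * (β - α)) * B * V := by
        gcongr
      calc _ ≤ 1 * (2 / M * B) + (1 * B / M + lam ^ 2 * (2 * (β - α)) * B * V) := by linarith
        _ = _ := by ring

/-- The maximal inequality for blocks of length `B` separated by gaps of length `B`, on a unit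
interval. -/
lemma volume_blocks_le {ν : ℕ → ℝ} {θ : ℝ} (hθ : 1 < θ) (hν0 : 1 ≤ ν 0)
    (hpos : ∀ j, 0 < ν j) (hlac : ∀ j, θ * ν j ≤ ν (j + 1)) {α β M lam : ℝ}
    {s B : ℕ} (hM1 : 1 ≤ M) (hαβ : 2 / M ≤ β - α) (hw1 : β - α ≤ 1 / 2)
    (hsB : B ≤ s) (hB : 7 * B ≤ M) (hgap : 2 * M ^ 2 ≤ θ ^ B)
    (hl : 0 ≤ lam) (hl1 : lam ≤ 1) (hlB : lam * B ≤ 1) (m : ℕ) (hm : m * B ≤ M) (A a : ℝ) :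
    volume {x | x ∈ Set.Ico A (A + 1) ∧ ∃ r ≤ m,
        a ≤ ∑ t ∈ Finset.range r, blockSum ν (s + 2 * B * t) B α β x} ≤
      ENNReal.ofReal (Real.exp (-(lam * a) + 3 +
        2 * lam ^ 2 * (β - α) * (2 + 4 / (θ - 1)) * M)) := by
  have hM : 0 < M := by linarith
  have hmono := lacunary_monotone hθ hpos hlac
  have hV : 0 ≤ 2 + 4 / (θ - 1) := by
    have : 0 < θ - 1 := by linarith
    positivity
  have hw0 : 0 ≤ β - α := le_trans (by positivity) hαβ
  set V := 2 + 4 / (θ - 1) with hVdef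
  set Q := Real.exp (B * (3 / M + 2 * lam ^ 2 * (β - α) * V)) with hQ
  have hQ1 : 1 ≤ Q := Real.one_le_exp (by positivity)
  have hstep : ∀ (t : ℕ) (p q : ℝ), p < q → M / ν (s + 2 * B * t) ≤ q - p →
      ∃ (K : ℕ) (τ : ℕ → ℝ), 0 < K ∧
      M / ν (s + 2 * B * (t + 1)) ≤ (q - p) / K ∧
      (∀ i < K, ∀ x ∈ Set.Ico (p + i * ((q - p) / K)) (p + (i + 1) * ((q - p) / K)),
        blockSum ν (s + 2 * B * t) B α β x ≤ τ i) ∧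
      ∑ i ∈ Finset.range K, (q - p) / K * Real.exp (lam * τ i) ≤ (q - p) * Q := by
    intro t p q hpq hℓ
    rw [show s + 2 * B * (t + 1) = s + 2 * B * t + 2 * B by ring]
    exact block_step hθ hpos hlac hM1 hαβ hw1 hB hgap hl hl1 hlB (s + 2 * B * t) hpq hℓ
  have h0 : M / ν (s + 2 * B * 0) ≤ A + 1 - A := by
    have h1 : θ ^ B * ν 0 ≤ ν (0 + B) := lacunary_pow hθ hlac 0 B
    have h2 : ν (0 + B) ≤ ν (s + 2 * B * 0) := hmono (by omega)
    have h3 : θ ^ B * 1 ≤ θ ^ B * ν 0 := mul_le_mul_of_nonneg_left hν0 (by positivity)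
    have h4 : M ≤ 2 * M ^ 2 := by nlinarith
    rw [div_le_iff₀ (hpos _), show A + 1 - A = 1 by ring, one_mul]
    linarith
  have hmain := volume_maximal_le (T := fun t => blockSum ν (s + 2 * B * t) B α β)
    (ℓ := fun t => M / ν (s + 2 * B * t)) hl hQ1 hstep m 0 A (A + 1) a (by linarith) h0
  simp only [zero_add] at hmain
  refine hmain.trans (ENNReal.ofReal_le_ofReal ?_)
  rw [hQ, ← Real.exp_nat_mul, ← Real.exp_add, show A + 1 - A = 1 by ring, one_mul]
  refine Real.exp_le_exp.2 ?_
  have h1 : (m * B : ℝ) * (3 / M + 2 * lam ^ 2 * (β - α) * V) ≤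
      M * (3 / M + 2 * lam ^ 2 * (β - α) * V) :=
    mul_le_mul_of_nonneg_right hm (by positivity)
  have h2 : M * (3 / M) = 3 := by field_simp
  linarith

/-! ### Deterministic reductions: chaining and splitting into blocks -/

/-- Chaining along dyadic points, from upper bounds only: since `g 1 = g 0`, a lower bound for
`g a - g 0` is an upper bound for `g 1 - g a`. A general point `a` is replaced by the neighbouring
dyadic points of level `k`, at the cost of the trivial one-sided estimate `hlow`. -/
lemma dyadic_chaining {g : ℝ → ℝ} {E : ℕ → ℝ} {k : ℕ} {N : ℝ} (hE0 : ∀ h, 0 ≤ E h)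
    (hN : 0 ≤ N) (hg : g 1 = g 0)
    (hlow : ∀ α β, 0 ≤ α → α ≤ β → β ≤ 1 → -(N * (β - α)) ≤ g β - g α)
    (hE : ∀ h, 1 ≤ h → h ≤ k → ∀ i : ℕ, i < 2 ^ h →
      g ((i + 1) / 2 ^ h) - g (i / 2 ^ h) ≤ E h) {a : ℝ} (ha0 : 0 ≤ a) (ha1 : a ≤ 1) :
    |g a - g 0| ≤ ∑ h ∈ Finset.range k, E (h + 1) + N / 2 ^ k := by
  have key : ∀ h ≤ k, ∀ i : ℕ, i ≤ 2 ^ h →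
      g (i / 2 ^ h) - g 0 ≤ ∑ j ∈ Finset.range h, E (j + 1) ∧
      g 1 - g (i / 2 ^ h) ≤ ∑ j ∈ Finset.range h, E (j + 1) := by
    intro h
    induction h with
    | zero =>
      intro _ i hi
      have : i = 0 ∨ i = 1 := by simp at hi; omega
      rcases this with rfl | rfl <;> simp [hg]
    | succ h ih =>
      intro hk i hi
      have ih := ih (by omega)
      have hE1 := hE0 (h + 1)
      rw [Finset.sum_range_succ]
      have h2 : (2 : ℝ) ^ h ≠ 0 := by positivity
      have half : ∀ m : ℕ, (2 * (m : ℝ)) / 2 ^ (h + 1) = m / 2 ^ h := by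
        intro m; rw [pow_succ]; field_simp
      rw [pow_succ] at hi
      rcases Nat.even_or_odd' i with ⟨m, rfl | rfl⟩
      · have := ih m (by omega)
        push_cast
        rw [half]
        constructor <;> linarith [this.1, this.2]
      · have i1 := ih m (by omega)
        have i2 := ih (m + 1) (by omega)
        have e1 := hE (h + 1) (by omega) hk (2 * m) (by rw [pow_succ]; omega)
        have e2 := hE (h + 1) (by omega) hk (2 * m + 1) (by rw [pow_succ]; omega)
        push_cast at e1 e2 i2 ⊢
        rw [half] at e1
        rw [show (2 * (m : ℝ) + 1 + 1) / 2 ^ (h + 1) = ((m : ℝ) + 1) / 2 ^ h by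
          rw [pow_succ]; field_simp; ring] at e2
        constructor <;> linarith [i1.1, i2.2]
  have hp : (0 : ℝ) < 2 ^ k := by positivity
  have ha2 : a * 2 ^ k ≤ 2 ^ k := by nlinarith
  have hc : ⌈a * 2 ^ k⌉₊ ≤ 2 ^ k := Nat.ceil_le.2 (by push_cast; exact ha2)
  have hf : ⌊a * 2 ^ k⌋₊ ≤ 2 ^ k := (Nat.floor_le_ceil _).trans hc
  have c1 : a ≤ (⌈a * 2 ^ k⌉₊ : ℝ) / 2 ^ k := by
    rw [le_div_iff₀ hp]; exact Nat.le_ceil _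
  have c2 : (⌈a * 2 ^ k⌉₊ : ℝ) / 2 ^ k ≤ 1 := by
    rw [div_le_one hp]; exact_mod_cast hc
  have c3 : (⌈a * 2 ^ k⌉₊ : ℝ) / 2 ^ k ≤ a + 1 / 2 ^ k := by
    rw [div_le_iff₀ hp, add_mul, div_mul_cancel₀ _ hp.ne']
    exact (Nat.ceil_lt_add_one (by positivity)).le
  have f1 : (⌊a * 2 ^ k⌋₊ : ℝ) / 2 ^ k ≤ a := by
    rw [div_le_iff₀ hp]; exact Nat.floor_le (by positivity)
  have f2 : a ≤ (⌊a * 2 ^ k⌋₊ : ℝ) / 2 ^ k + 1 / 2 ^ k := by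
    rw [← add_div, le_div_iff₀ hp]; exact (Nat.lt_floor_add_one _).le
  have l1 := hlow _ _ ha0 c1 c2
  have l2 := hlow _ _ (by positivity) f1 ha1
  have k1 := (key k le_rfl _ hc).1
  have k2 := (key k le_rfl _ hf).2
  have n1 : N * ((⌈a * 2 ^ k⌉₊ : ℝ) / 2 ^ k - a) ≤ N * (1 / 2 ^ k) :=
    mul_le_mul_of_nonneg_left (by linarith) hN
  have n2 : N * (a - (⌊a * 2 ^ k⌋₊ : ℝ) / 2 ^ k) ≤ N * (1 / 2 ^ k) :=
    mul_le_mul_of_nonneg_left (by linarith) hN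
  rw [mul_one_div] at n1 n2
  rw [abs_le]
  constructor <;> linarith

/-- The indices below `N` consist of a first block of length `B`, alternating blocks of two colours,
and an incomplete pair of blocks at the end; the first block and the incomplete pair are bounded
trivially, which gives the `3 * B`. -/
lemma sum_le_of_blocks {F : ℕ → ℝ} (hF : ∀ j, F j ≤ 1) {B m N : ℕ} {a : ℝ} (hB : 0 < B)
    (hNm : N / B ≤ m)
    (h1 : ∀ r ≤ m, ∑ t ∈ Finset.range r, ∑ i ∈ Finset.range B, F (B + 2 * B * t + i) ≤ a)
    (h2 : ∀ r ≤ m, ∑ t ∈ Finset.range r, ∑ i ∈ Finset.range B, F (2 * B + 2 * B * t + i) ≤ a) :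
    ∑ j ∈ Finset.range N, F j ≤ 3 * B + 2 * a := by
  have ha : 0 ≤ a := by simpa using h1 0 (by omega)
  have triv : ∀ (n : ℕ) (G : ℕ → ℝ), (∀ j, G j ≤ 1) → ∑ j ∈ Finset.range n, G j ≤ n := by
    intro n G hG
    calc _ ≤ ∑ j ∈ Finset.range n, (1 : ℝ) := Finset.sum_le_sum fun i _ => hG i
      _ = n := by simp
  by_cases hN : N < B
  · have := triv N F hF
    have h' : (N : ℝ) ≤ B := by exact_mod_cast hN.le
    have : (0 : ℝ) ≤ B := by positivity
    linarith
  push Not at hN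
  set r := (N - B) / (2 * B) with hr
  set e := (N - B) % (2 * B) with he
  have hNe : N = B + (2 * B * r + e) := by
    have : 2 * B * r + e = N - B := Nat.div_add_mod (N - B) (2 * B)
    omega
  have hrm : r ≤ m := by
    refine le_trans ?_ hNm
    rw [Nat.le_div_iff_mul_le hB]
    have : r * B ≤ 2 * B * r := by nlinarith
    linarith
  have heB : e < 2 * B := Nat.mod_lt _ (by omega)
  have hpairs : ∀ r : ℕ, ∑ j ∈ Finset.range (2 * B * r), F (B + j) =
      ∑ t ∈ Finset.range r, ∑ i ∈ Finset.range B, F (B + 2 * B * t + i) +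
      ∑ t ∈ Finset.range r, ∑ i ∈ Finset.range B, F (2 * B + 2 * B * t + i) := by
    intro r
    induction r with
    | zero => simp
    | succ r ih =>
      rw [show 2 * B * (r + 1) = 2 * B * r + (B + B) by ring, Finset.sum_range_add, ih,
        Finset.sum_range_add, Finset.sum_range_succ, Finset.sum_range_succ]
      have e1 : ∀ i, F (B + (2 * B * r + i)) = F (B + 2 * B * r + i) := fun i => by
        congr 1; ring
      have e2 : ∀ i, F (B + 2 * B * r + (B + i)) = F (2 * B + 2 * B * r + i) := fun i => by
        congr 1; ring
      simp only [e1, e2]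
      ring
  rw [hNe, Finset.sum_range_add, Finset.sum_range_add, hpairs]
  have t1 := triv B F hF
  have t2 := triv e (fun j => F (B + (2 * B * r + j))) fun j => hF _
  have t3 : (e : ℝ) ≤ 2 * B := by exact_mod_cast heB.le
  linarith [h1 r hrm, h2 r hrm]

/-! ### Dyadic intervals and the Borel–Cantelli argument -/

/-- Closed form of the sum of the chaining weights in `thr`; for `c ≥ 0` it stays below `3 * c + 3 / 2`. -/
lemma sum_weights (c : ℝ) (k : ℕ) :
    ∑ h ∈ Finset.range k, (3 / 4 : ℝ) ^ (h + 1) * (c + ((h + 1 : ℕ) : ℝ) / 8) =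
      3 * c + 3 / 2 - (3 / 4) ^ k * (3 * c + 3 / 2 + 3 / 8 * k) := by
  induction k with
  | zero => simp
  | succ k ih =>
    rw [Finset.sum_range_succ, ih]
    push_cast
    ring

/-- The threshold for block sums of dyadic intervals of level `h` among the first `4 ^ k` indices.
The factor `(3 / 4) ^ h` makes the thresholds summable in `h`, while it decays more slowly than
the standard deviation factor `2 ^ (-h / 2)`. The term `4` buys the factor `k ^ (-2)` in
`volume_dyadic_le`, and the term `h / 8` the factor `4 ^ (-h)`. -/
noncomputable def thr (V : ℝ) (k h : ℕ) : ℝ :=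
  (3 / 4) ^ h * (V + 4 + (h : ℝ) / 8) * (2 ^ k * Real.sqrt (Real.log k))

/-- The maximal inequality at a dyadic interval of level `h`, with
`lam = (4 / 3) ^ h * √(log k) / (2 * 2 ^ k)`. -/
lemma volume_dyadic_le {ν : ℕ → ℝ} {θ : ℝ} (hθ : 1 < θ) (hν0 : 1 ≤ ν 0)
    (hpos : ∀ j, 0 < ν j) (hlac : ∀ j, θ * ν j ≤ ν (j + 1)) {C k : ℕ} (hC : 32 ≤ θ ^ C)
    (hk : 1 ≤ k) (hk1 : (7 * (C * k : ℕ) : ℝ) ≤ 4 ^ k) (hk2 : ((C * k : ℕ) : ℝ) * k * (2 / 3) ^ k ≤ 1)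
    (hk3 : 16 * Real.log 4 ≤ Real.log k) {s : ℕ} (hs : C * k ≤ s) {h : ℕ} (hh1 : 1 ≤ h)
    (hhk : h ≤ k) (i : ℕ) (A : ℝ) :
    volume {x | x ∈ Set.Ico A (A + 1) ∧ ∃ r ≤ 4 ^ k / (C * k),
        thr (2 + 4 / (θ - 1)) k h ≤ ∑ t ∈ Finset.range r, blockSum ν (s + 2 * (C * k) * t) (C * k)
          (i / 2 ^ h) ((i + 1) / 2 ^ h) x} ≤
      ENNReal.ofReal (Real.exp 3 * (1 / (k : ℝ) ^ 2) * (1 / 4) ^ h) := by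
  have hV : 0 ≤ 2 + 4 / (θ - 1) := by
    have : 0 < θ - 1 := by linarith
    positivity
  set V := 2 + 4 / (θ - 1) with hVdef
  set L := Real.log k with hL
  have hkr : (1 : ℝ) ≤ k := by exact_mod_cast hk
  have hL0 : 0 ≤ L := Real.log_nonneg hkr
  have hLk : L ≤ k := (Real.log_le_sub_one_of_pos (by linarith)).trans (by linarith)
  have hsq : Real.sqrt L ^ 2 = L := Real.sq_sqrt hL0
  have hsk : Real.sqrt L ≤ k := by
    rw [Real.sqrt_le_left (by linarith)]
    nlinarith
  set S := Real.sqrt L with hS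
  have hS0 : 0 ≤ S := Real.sqrt_nonneg _
  set lam : ℝ := 1 / 2 * (4 / 3) ^ h * (S / 2 ^ k) with hlam
  have hw : ((i : ℝ) + 1) / 2 ^ h - i / 2 ^ h = 1 / 2 ^ h := by ring
  have hlam0 : 0 ≤ lam := by positivity
  have hlamk : lam ≤ k * (2 / 3) ^ k := by
    have h1 : (4 / 3 : ℝ) ^ h ≤ (4 / 3) ^ k := pow_le_pow_right₀ (by norm_num) hhk
    have e : (2 / 3 : ℝ) ^ k = (4 / 3) ^ k / 2 ^ k := by rw [← div_pow]; norm_num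
    rw [e, hlam]
    calc 1 / 2 * (4 / 3 : ℝ) ^ h * (S / 2 ^ k) ≤ 1 * (4 / 3) ^ k * (k / 2 ^ k) := by
          gcongr; norm_num
      _ = _ := by ring
  have hCpos : 0 < C := by
    rcases Nat.eq_zero_or_pos C with rfl | h0
    · norm_num at hC
    · exact h0
  have hBpos : 0 < C * k := Nat.mul_pos hCpos (by omega)
  have hB1 : (1 : ℝ) ≤ ((C * k : ℕ) : ℝ) := by exact_mod_cast hBpos
  have hlB : lam * ((C * k : ℕ) : ℝ) ≤ 1 := by
    calc _ ≤ k * (2 / 3) ^ k * ((C * k : ℕ) : ℝ) := by gcongr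
      _ ≤ 1 := by linarith
  have hl1 : lam ≤ 1 := by nlinarith
  have h2h : (2 : ℝ) ≤ 2 ^ h := by
    calc (2 : ℝ) = 2 ^ 1 := by norm_num
      _ ≤ _ := pow_le_pow_right₀ (by norm_num) hh1
  have h4k : (4 : ℝ) ^ k = 2 ^ k * 2 ^ k := by rw [← mul_pow]; norm_num
  have h2k : (2 : ℝ) ^ h ≤ 2 ^ k := pow_le_pow_right₀ (by norm_num) hhk
  have hmain := volume_blocks_le (ν := ν) (α := i / 2 ^ h) (β := (i + 1) / 2 ^ h)
    (M := 4 ^ k) (lam := lam) (s := s) (B := C * k) hθ hν0 hpos hlac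
    (one_le_pow₀ (by norm_num))
    (by
      rw [hw, div_le_div_iff₀ (by positivity) (by positivity), h4k]
      nlinarith)
    (by
      rw [hw, div_le_div_iff₀ (by positivity) (by positivity)]
      linarith)
    hs hk1
    (by
      rw [pow_mul]
      calc 2 * ((4 : ℝ) ^ k) ^ 2 = 2 ^ 1 * 16 ^ k := by
            rw [← pow_mul, mul_comm k 2, pow_mul]; norm_num
        _ ≤ 2 ^ k * 16 ^ k := by
            gcongr
            norm_num
        _ = 32 ^ k := by rw [← mul_pow]; norm_num
        _ ≤ _ := pow_le_pow_left₀ (by norm_num) hC k)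
    hlam0 hl1 hlB (4 ^ k / (C * k))
    (by exact_mod_cast Nat.div_mul_le_self (4 ^ k) (C * k)) A (thr V k h)
  refine hmain.trans (ENNReal.ofReal_le_ofReal ?_)
  have e1 : lam * thr V k h = 1 / 2 * (V + 4 + (h : ℝ) / 8) * L := by
    rw [← hsq, hlam, thr]
    have : (4 / 3 : ℝ) ^ h * (3 / 4) ^ h = 1 := by rw [← mul_pow]; norm_num
    rw [← hL, ← hS]
    calc _ = 1 / 2 * (V + 4 + (h : ℝ) / 8) * S ^ 2 * ((4 / 3 : ℝ) ^ h * (3 / 4) ^ h) *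
          (2 ^ k / 2 ^ k) := by ring
      _ = _ := by rw [this, div_self (by positivity)]; ring
  have e2 : 2 * lam ^ 2 * ((i + 1) / 2 ^ h - i / 2 ^ h) * V * 4 ^ k ≤ 1 / 2 * V * L := by
    rw [hw, ← hsq, hlam, h4k]
    have : ((4 / 3 : ℝ) ^ h) ^ 2 / 2 ^ h ≤ 1 := by
      rw [div_le_one (by positivity), ← pow_mul, mul_comm h 2, pow_mul]
      exact pow_le_pow_left₀ (by norm_num) (by norm_num) h
    calc _ = 1 / 2 * V * S ^ 2 * (((4 / 3 : ℝ) ^ h) ^ 2 / 2 ^ h) * ((2 ^ k / 2 ^ k) ^ 2) := by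
          ring
      _ ≤ 1 / 2 * V * S ^ 2 * 1 * ((2 ^ k / 2 ^ k) ^ 2) := by gcongr
      _ = _ := by rw [div_self (by positivity)]; ring
  have e3 : Real.exp 3 * (1 / (k : ℝ) ^ 2) * (1 / 4) ^ h =
      Real.exp (3 + -(2 * L) + -(h * Real.log 4)) := by
    rw [Real.exp_add, Real.exp_add, Real.exp_neg, Real.exp_neg, Real.exp_nat_mul,
      Real.exp_log (by norm_num), show (2 : ℝ) * L = (2 : ℕ) * L by norm_num,
      Real.exp_nat_mul, hL, Real.exp_log (by linarith)]
    simp [one_div]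
  rw [e3, e1]
  refine Real.exp_le_exp.2 ?_
  have := mul_le_mul_of_nonneg_left hk3 (Nat.cast_nonneg (α := ℝ) h)
  linarith

/-- Largeness conditions on `k` when the blocks have length `C * k`. -/
lemma eventually_params (C : ℕ) : ∀ᶠ k : ℕ in atTop, 4 ≤ k ∧ (7 * (C * k : ℕ) : ℝ) ≤ 4 ^ k ∧
    ((C * k : ℕ) : ℝ) * k * (2 / 3) ^ k ≤ 1 ∧ 16 * Real.log 4 ≤ Real.log k ∧
    12 * ((C * k : ℕ) : ℝ) * k ≤ 2 ^ k := by
  have h1 : Tendsto (fun k : ℕ => ((C * k : ℕ) : ℝ) * k * (2 / 3) ^ k) atTop (nhds 0) := by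
    have := (tendsto_pow_const_mul_const_pow_of_lt_one 2 (r := (2 / 3 : ℝ)) (by norm_num)
      (by norm_num)).const_mul (C : ℝ)
    rw [mul_zero] at this
    refine this.congr fun k => ?_
    push_cast; ring
  have h2 : Tendsto (fun k : ℕ => 12 * ((C * k : ℕ) : ℝ) * k * (1 / 2) ^ k) atTop (nhds 0) := by
    have := (tendsto_pow_const_mul_const_pow_of_lt_one 2 (r := (1 / 2 : ℝ)) (by norm_num)
      (by norm_num)).const_mul (12 * C : ℝ)
    rw [mul_zero] at this
    refine this.congr fun k => ?_
    push_cast; ring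
  have h3 : Tendsto (fun k : ℕ => Real.log k) atTop atTop :=
    Real.tendsto_log_atTop.comp tendsto_natCast_atTop_atTop
  filter_upwards [eventually_ge_atTop 4, h1.eventually_le_const one_pos,
    h2.eventually_le_const one_pos, h3.eventually_ge_atTop (16 * Real.log 4)] with k a b c d
  have hp : (0 : ℝ) < 2 ^ k := by positivity
  have e : 12 * ((C * k : ℕ) : ℝ) * k ≤ 2 ^ k := by
    rw [one_div, inv_pow, ← div_eq_mul_inv, div_le_one hp] at c
    exact c
  refine ⟨a, ?_, b, d, e⟩
  have hk : (4 : ℝ) ≤ k := by exact_mod_cast a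
  have hB : (0 : ℝ) ≤ ((C * k : ℕ) : ℝ) := by positivity
  have h4 : (2 : ℝ) ^ k ≤ 4 ^ k := pow_le_pow_left₀ (by norm_num) (by norm_num) k
  nlinarith

/-- Borel–Cantelli: the exceptional sets of level `k` in a unit interval have total measure
`O(k ^ (-2))`, after summing over all `2 ^ h` dyadic intervals, all `h ≤ k`, and both colours. -/
lemma ae_eventually_block_bound {ν : ℕ → ℝ} {θ : ℝ} (hθ : 1 < θ) (hν0 : 1 ≤ ν 0)
    (hpos : ∀ j, 0 < ν j) (hlac : ∀ j, θ * ν j ≤ ν (j + 1)) {C : ℕ} (hC : 32 ≤ θ ^ C) :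
    ∀ᵐ x : ℝ ∂volume, ∀ᶠ k : ℕ in atTop, ∀ h, 1 ≤ h → h ≤ k → ∀ i : ℕ, i < 2 ^ h →
      ∀ s, (s = C * k ∨ s = 2 * (C * k)) → ∀ r ≤ 4 ^ k / (C * k),
        ∑ t ∈ Finset.range r, blockSum ν (s + 2 * (C * k) * t) (C * k)
          (i / 2 ^ h) ((i + 1) / 2 ^ h) x ≤ thr (2 + 4 / (θ - 1)) k h := by
  obtain ⟨k0, hk0⟩ := eventually_atTop.1 (eventually_params C)
  let bad : ℤ → ℕ → ℕ → ℕ → ℕ → Set ℝ := fun A k h i s =>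
    {x | x ∈ Set.Ico (A : ℝ) (A + 1) ∧ ∃ r ≤ 4 ^ k / (C * k),
      thr (2 + 4 / (θ - 1)) k h ≤ ∑ t ∈ Finset.range r,
        blockSum ν (s + 2 * (C * k) * t) (C * k) (i / 2 ^ h) ((i + 1) / 2 ^ h) x}
  let Bad : ℤ → ℕ → Set ℝ := fun A k => if k0 ≤ k then
    ⋃ h ∈ Finset.Icc 1 k, ⋃ i ∈ Finset.range (2 ^ h), ⋃ c ∈ Finset.range 2,
      bad A k h i ((c + 1) * (C * k)) else ∅
  have hBad : ∀ A k, volume (Bad A k) ≤ ENNReal.ofReal (4 * Real.exp 3 * (1 / (k : ℝ) ^ 2)) := by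
    intro A k
    simp only [Bad]
    split_ifs with hk
    swap
    · simp
    obtain ⟨p1, p2, p3, p4, p5⟩ := hk0 k hk
    have hc0 : 0 ≤ Real.exp 3 * (1 / (k : ℝ) ^ 2) := by positivity
    have s1 : ∀ h ∈ Finset.Icc 1 k, ∀ i ∈ Finset.range (2 ^ h), ∀ c ∈ Finset.range 2,
        volume (bad A k h i ((c + 1) * (C * k))) ≤
          ENNReal.ofReal (Real.exp 3 * (1 / (k : ℝ) ^ 2) * (1 / 4) ^ h) := by
      intro h hh i _ c _
      rw [Finset.mem_Icc] at hh
      exact volume_dyadic_le hθ hν0 hpos hlac hC (by omega) p2 p3 p4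
        (Nat.le_mul_of_pos_left _ (by omega)) hh.1 hh.2 i A
    have s2 : ∀ h ∈ Finset.Icc 1 k, volume (⋃ i ∈ Finset.range (2 ^ h), ⋃ c ∈ Finset.range 2,
        bad A k h i ((c + 1) * (C * k))) ≤
          ENNReal.ofReal (2 * (Real.exp 3 * (1 / (k : ℝ) ^ 2)) * (1 / 2) ^ h) := by
      intro h hh
      refine (measure_biUnion_finset_le _ _).trans ((Finset.sum_le_sum fun i hi =>
        (measure_biUnion_finset_le _ _).trans (Finset.sum_le_sum (s1 h hh i hi))).trans ?_)
      rw [← ENNReal.ofReal_sum_of_nonneg fun _ _ => by positivity,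
        ← ENNReal.ofReal_sum_of_nonneg fun _ _ => by positivity]
      refine ENNReal.ofReal_le_ofReal (le_of_eq ?_)
      simp only [Finset.sum_const, Finset.card_range, nsmul_eq_mul]
      have : ((1 : ℝ) / 2) ^ h = 2 ^ h * (1 / 4) ^ h := by rw [← mul_pow]; norm_num
      rw [this]
      push_cast; ring
    refine (measure_biUnion_finset_le _ _).trans ((Finset.sum_le_sum s2).trans ?_)
    rw [← ENNReal.ofReal_sum_of_nonneg fun _ _ => by positivity, ← Finset.mul_sum]
    refine ENNReal.ofReal_le_ofReal ?_
    have : ∑ h ∈ Finset.Icc 1 k, ((1 : ℝ) / 2) ^ h ≤ 2 := by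
      refine le_trans (Finset.sum_le_sum_of_subset_of_nonneg (t := Finset.range (k + 1)) ?_ ?_)
        (sum_geometric_two_le (k + 1))
      · intro h hh; simp at hh ⊢; omega
      · intros; positivity
    nlinarith
  have hae : ∀ A : ℤ, ∀ᵐ x : ℝ ∂volume, ∀ᶠ k in atTop, x ∉ Bad A k := by
    intro A
    refine ae_eventually_notMem (ne_top_of_le_ne_top ?_ (ENNReal.tsum_le_tsum (hBad A)))
    refine Summable.tsum_ofReal_ne_top ?_
    exact (Real.summable_one_div_nat_pow.2 (by norm_num)).mul_left _
  filter_upwards [ae_all_iff.2 hae] with x hx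
  filter_upwards [hx ⌊x⌋, eventually_ge_atTop k0] with k hk hkk0 h h1 h2 i hi s hs r hr
  by_contra hcon
  push Not at hcon
  apply hk
  simp only [Bad, if_pos hkk0, Set.mem_iUnion]
  have hmem : x ∈ bad ⌊x⌋ k h i s :=
    ⟨⟨Int.floor_le x, Int.lt_floor_add_one x⟩, r, hr, hcon.le⟩
  refine ⟨h, Finset.mem_Icc.2 ⟨h1, h2⟩, i, Finset.mem_range.2 hi, ?_⟩
  rcases hs with rfl | rfl
  · exact ⟨0, by simp, by simpa using hmem⟩
  · exact ⟨1, by simp, by simpa using hmem⟩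

/-! ### From block bounds to the discrepancy -/

lemma sum_saw_eq_count (f : ℕ → ℝ) {u v : ℝ} (h0 : 0 ≤ u) (huv : u ≤ v) (h1 : v ≤ 1) (N : ℕ) :
    ∑ j ∈ Finset.range N, saw u v (f (j + 1)) =
      (((Finset.Icc 1 N).filter (fun j => u ≤ Int.fract (f j) ∧ Int.fract (f j) < v)).card : ℝ) -
        N * (v - u) := by
  rw [Finset.card_filter]
  push_cast
  induction N with
  | zero => simp
  | succ N ih =>
    rw [Finset.sum_range_succ, ih, Finset.sum_Icc_succ_top (by omega),
      saw_eq_indicator h0 huv h1]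
    push_cast
    ring

/-- A discrepancy bound from upper bounds on block sums over dyadic intervals, by chaining for the
function `g` given by `g α = ∑ fract (f j - α)`, whose increments are the centred counts. The factor
`2` comes from comparing both endpoints with `0`. -/
lemma disc_bound {f : ℕ → ℝ} {V : ℝ} {B k N : ℕ} (hV : 0 ≤ V) (hB : 0 < B) (hN : 0 < N)
    (hN4 : N ≤ 4 ^ k)
    (hblk : ∀ h, 1 ≤ h → h ≤ k → ∀ i : ℕ, i < 2 ^ h → ∀ s, (s = B ∨ s = 2 * B) →
      ∀ r ≤ 4 ^ k / B, ∑ t ∈ Finset.range r, ∑ j ∈ Finset.range B,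
        saw (i / 2 ^ h) ((i + 1) / 2 ^ h) (f (s + 2 * B * t + j + 1)) ≤ thr V k h) :
    seqDisc (fun j => Int.fract (f j)) N ≤
      2 * (3 * B * k + (6 * V + 27) * (2 ^ k * Real.sqrt (Real.log k)) + N / 2 ^ k) / N := by
  set g : ℝ → ℝ := fun α => ∑ j ∈ Finset.range N, Int.fract (f (j + 1) - α) with hg
  have hgs : ∀ α β, g β - g α = ∑ j ∈ Finset.range N, saw α β (f (j + 1)) := fun α β => by
    simp only [hg, ← Finset.sum_sub_distrib, saw]
  have hNr : (0 : ℝ) < N := by exact_mod_cast hN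
  have hthr : ∀ h, 0 ≤ thr V k h := fun h => by unfold thr; positivity
  have hdy : ∀ a, 0 ≤ a → a ≤ 1 → |g a - g 0| ≤
      ∑ h ∈ Finset.range k, (3 * B + 2 * thr V k (h + 1)) + N / 2 ^ k := by
    intro a ha0 ha1
    refine dyadic_chaining (E := fun h => 3 * B + 2 * thr V k h)
      (fun h => by have := hthr h; positivity) hNr.le ?_ ?_ ?_ ha0 ha1
    · simp [hg, Int.fract_sub_one]
    · intro α β _ hαβ _
      rw [hgs]
      calc _ = ∑ j ∈ Finset.range N, (-(β - α)) := by simp; ring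
        _ ≤ _ := Finset.sum_le_sum fun j _ => neg_length_le_saw hαβ _
    · intro h h1 h2 i hi
      rw [hgs]
      have hb := hblk h h1 h2 i hi
      exact sum_le_of_blocks (F := fun j => saw (i / 2 ^ h) ((i + 1) / 2 ^ h) (f (j + 1)))
        (m := 4 ^ k / B) (fun j => (le_abs_self _).trans (abs_saw_le _ _ _)) hB
        (Nat.div_le_div_right hN4) (hb B (Or.inl rfl)) (hb (2 * B) (Or.inr rfl))
  have hsum : ∑ h ∈ Finset.range k, (3 * (B : ℝ) + 2 * thr V k (h + 1)) ≤
      3 * B * k + (6 * V + 27) * (2 ^ k * Real.sqrt (Real.log k)) := by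
    rw [Finset.sum_add_distrib, ← Finset.mul_sum (Finset.range k) (fun h => thr V k (h + 1)) 2]
    have e : ∑ h ∈ Finset.range k, thr V k (h + 1) = (∑ h ∈ Finset.range k,
        (3 / 4 : ℝ) ^ (h + 1) * (V + 4 + ((h + 1 : ℕ) : ℝ) / 8)) *
          (2 ^ k * Real.sqrt (Real.log k)) := by
      rw [Finset.sum_mul]; rfl
    rw [e, sum_weights]
    have h1 : 0 ≤ (3 / 4 : ℝ) ^ k * (3 * (V + 4) + 3 / 2 + 3 / 8 * k) := by positivity
    have h2 : (3 * (V + 4) + 3 / 2 - (3 / 4 : ℝ) ^ k * (3 * (V + 4) + 3 / 2 + 3 / 8 * k)) *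
        (2 ^ k * Real.sqrt (Real.log k)) ≤ (3 * (V + 4) + 3 / 2) *
        (2 ^ k * Real.sqrt (Real.log k)) := by
      gcongr; linarith
    simp only [Finset.sum_const, Finset.card_range, nsmul_eq_mul]
    linarith
  refine Real.sSup_le ?_ (by positivity)
  rintro d ⟨u, v, hu, huv, hv, rfl⟩
  have e := sum_saw_eq_count f hu huv.le hv N
  rw [← hgs] at e
  set c := (((Finset.Icc 1 N).filter
    (fun j => u ≤ Int.fract (f j) ∧ Int.fract (f j) < v)).card : ℝ) with hc
  have e' : c / N - (v - u) = (g v - g u) / N := by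
    rw [e]; field_simp
  rw [e', abs_div, abs_of_pos hNr]
  refine div_le_div_of_nonneg_right ?_ hNr.le
  have a1 := hdy u hu (by linarith)
  have a2 := hdy v (by linarith) hv
  have a3 : |g v - g u| ≤ |g v - g 0| + |g u - g 0| := by
    have := abs_sub (g v - g 0) (g u - g 0)
    rwa [sub_sub_sub_cancel_right] at this
  linarith

/-- Numerical conversion of `disc_bound`, using that `N` is within a factor `4` of `4 ^ k`. -/
lemma final_bound {V D : ℝ} {B k N : ℕ} (hV : 0 ≤ V) (hk : 4 ≤ k)
    (hNl : 4 ^ (k - 1) ≤ N) (hNu : N ≤ 4 ^ k) (hB : 12 * (B : ℝ) * k ≤ 2 ^ k)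
    (hL : 16 * Real.log 4 ≤ Real.log k)
    (hD : D ≤ 2 * (3 * B * k + (6 * V + 27) * (2 ^ k * Real.sqrt (Real.log k)) + N / 2 ^ k) / N) :
    D * Real.sqrt N / Real.sqrt (Real.log (Real.log N)) ≤ 24 * V + 111 := by
  have hkr : (4 : ℝ) ≤ k := by exact_mod_cast hk
  have hNl' : (4 : ℝ) ^ (k - 1) ≤ N := by exact_mod_cast hNl
  have hNu' : (N : ℝ) ≤ 4 ^ k := by exact_mod_cast hNu
  have hNpos : (0 : ℝ) < N := lt_of_lt_of_le (by positivity) hNl'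
  have h4k : (4 : ℝ) ^ k = 2 ^ k * 2 ^ k := by rw [← mul_pow]; norm_num
  have h4 : (4 : ℝ) ^ k ≤ 4 * N := by
    calc (4 : ℝ) ^ k = 4 * 4 ^ (k - 1) := by rw [← pow_succ']; congr 1; omega
      _ ≤ _ := by linarith
  set R := Real.sqrt N with hR
  have hRpos : 0 < R := Real.sqrt_pos.2 hNpos
  have hR2 : R * R = N := Real.mul_self_sqrt hNpos.le
  set P : ℝ := 2 ^ k with hP
  have hPpos : 0 < P := by positivity
  have hRP : R ≤ P := by
    rw [hR, Real.sqrt_le_left hPpos.le]; nlinarith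
  have hPR : P ≤ 2 * R := by nlinarith
  have hlog4 : 5 / 4 ≤ Real.log 4 := by
    rw [show (4 : ℝ) = 2 ^ 2 by norm_num, Real.log_pow]
    have := Real.log_two_gt_d9
    push_cast; linarith
  set L := Real.log k with hLdef
  have hL1 : 1 ≤ L := by linarith
  have hLL : L ≤ Real.log (Real.log N) := by
    have h1 : (k : ℝ) ≤ Real.log N := by
      have h2 := Real.log_le_log (by positivity) hNl'
      rw [Real.log_pow] at h2
      have h3 : ((k - 1 : ℕ) : ℝ) = k - 1 := by
        rw [Nat.cast_sub (by omega)]; simp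
      rw [h3] at h2
      -- `log k` is at least `16 * log 4`, so `k` is huge and `(k - 1) * log 4 ≥ (k - 1) * 5 / 4 ≥ k`
      have h5 : (16 : ℝ) ≤ k - 1 := by
        have := Real.log_le_sub_one_of_pos (show (0 : ℝ) < k by linarith)
        linarith
      nlinarith
    exact Real.log_le_log (by linarith) h1
  set S := Real.sqrt L with hS
  set W := Real.sqrt (Real.log (Real.log N)) with hW
  have hSW : S ≤ W := Real.sqrt_le_sqrt hLL
  have hS1 : 1 ≤ S := by rw [hS]; exact Real.one_le_sqrt.2 hL1
  have hWpos : 0 < W := by linarith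
  rw [div_le_iff₀ hWpos]
  have hNP : N / P ≤ R := by
    rw [div_le_iff₀ hPpos]; nlinarith
  have hBR : 3 * (B : ℝ) * k ≤ R / 2 := by linarith
  calc D * R ≤ 2 * (3 * B * k + (6 * V + 27) * (P * S) + N / P) / N * R :=
        mul_le_mul_of_nonneg_right hD hRpos.le
    _ ≤ 2 * (R / 2 + (6 * V + 27) * (2 * R * W) + R) / N * R := by gcongr
    _ = 24 * V * W + 108 * W + 3 := by
        rw [← hR2]; field_simp; ring
    _ ≤ (24 * V + 111) * W := by nlinarith

end LacunaryLIL

theorem stmt14 (θ : ℝ) (hθ : 1 < θ) (nj : ℕ → ℕ)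
    (hpos : ∀ j, 1 ≤ j → 0 < nj j)
    (hlac : ∀ j, 1 ≤ j → θ * (nj j : ℝ) ≤ (nj (j + 1) : ℝ)) :
    ∀ᵐ x : ℝ ∂MeasureTheory.volume,
      limsup (fun N : ℕ =>
          seqDisc (fun j => Int.fract ((nj j : ℝ) * x)) N * Real.sqrt N /
            Real.sqrt (Real.log (Real.log N))) atTop <
        166 + 664 / (Real.sqrt θ - 1) := by
  open LacunaryLIL in
  obtain ⟨C, hC⟩ := pow_unbounded_of_one_lt 32 hθ
  have hC1 : 0 < C := by
    rcases Nat.eq_zero_or_pos C with rfl | h0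
    · norm_num at hC
    · exact h0
  have hθ1 : 0 < θ - 1 := by linarith
  set V := 2 + 4 / (θ - 1) with hV
  have hV0 : 0 ≤ V := by positivity
  have hconst : 24 * V + 111 < 166 + 664 / (Real.sqrt θ - 1) := by
    have hs : 1 < Real.sqrt θ := by rw [Real.lt_sqrt] <;> linarith
    have hs' : 0 < Real.sqrt θ - 1 := by linarith
    have hsq : Real.sqrt θ * Real.sqrt θ = θ := Real.mul_self_sqrt (by linarith)
    have h1 : 4 / (θ - 1) ≤ 4 / (Real.sqrt θ - 1) :=
      div_le_div_of_nonneg_left (by norm_num) hs' (by nlinarith)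
    have h2 : 664 / (Real.sqrt θ - 1) = 166 * (4 / (Real.sqrt θ - 1)) := by ring
    have h3 : 0 < 4 / (Real.sqrt θ - 1) := by positivity
    rw [h2, hV]; linarith
  -- the sequence re-indexed from `0`
  let ν : ℕ → ℝ := fun j => nj (j + 1)
  have hae := ae_eventually_block_bound (ν := ν) hθ
    (by have := hpos 1 le_rfl; simp only [ν]; exact_mod_cast this)
    (fun j => by have := hpos (j + 1) (by omega); simp only [ν]; exact_mod_cast this)
    (fun j => hlac (j + 1) (by omega)) hC.le
  filter_upwards [hae] with x hx
  refine lt_of_le_of_lt ?_ hconst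
  refine limsup_le_of_le ?_ ?_
  -- the real-valued `limsup` is not a junk value from below: the sequence is nonnegative
  · refine isCoboundedUnder_le_of_le atTop (x := 0) fun N => ?_
    have : 0 ≤ seqDisc (fun j => Int.fract ((nj j : ℝ) * x)) N :=
      Real.sSup_nonneg (by rintro d ⟨u, v, _, _, _, rfl⟩; exact abs_nonneg _)
    positivity
  -- each `N` is treated at the level `k` with `4 ^ (k - 1) ≤ N < 4 ^ k`
  have hkt : Tendsto (fun N : ℕ => Nat.log 4 N + 1) atTop atTop := by
    refine tendsto_atTop.2 fun K => ?_
    filter_upwards [eventually_ge_atTop (4 ^ K)] with N hN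
    exact (Nat.le_log_of_pow_le (by norm_num) hN).trans (Nat.le_succ _)
  filter_upwards [hkt.eventually hx, hkt.eventually (eventually_params C),
    eventually_ge_atTop 1] with N h1 h2 hN
  obtain ⟨p1, -, -, p4, p5⟩ := h2
  have hNu : N ≤ 4 ^ (Nat.log 4 N + 1) := (Nat.lt_pow_succ_log_self (by norm_num) N).le
  have hNl : 4 ^ (Nat.log 4 N + 1 - 1) ≤ N := by
    rw [Nat.add_sub_cancel]; exact Nat.pow_log_le_self 4 (by omega)
  generalize Nat.log 4 N + 1 = k at h1 p1 p4 p5 hNu hNl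
  refine final_bound (B := C * k) hV0 p1 hNl hNu p5 p4 ?_
  exact disc_bound (f := fun j => (nj j : ℝ) * x) hV0 (Nat.mul_pos hC1 (by omega)) (by omega)
    hNu h1
end
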